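/- Boundary growth lemma in cubes. For every integer n ≥ 2, reals 0 < λ ≤ Λ, exponents q > n and p with n ≤ p ≤ q, d₀ ∈ (0,1/4], K > 0, and every ν > 0, there exist constants k > 0 and a > 0 such that the following holds. Let b, f : Q₂ → ℝ be continuous with b ≥ 0, f ≥ 0, ‖b‖_{L^q(Q₂)} ≤ K and ‖f‖_{L^{p,q}(Q₂)} ≤ a, and let u be a C² function on Q₂ with u ≥ 0 and L⁻[u] ≤ f in Q₂. If |{x ∈ Q₁ : u(x) > x_n}| ≥ ν, then u(x) > k·x_n for all x ∈ Q₁. -/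

import Mathlib

open MeasureTheory
open scoped ENNReal

/-- The Pucci minimal extremal operator `𝓜⁻(M)` with ellipticity constants `lam ≤ Lam`:
the infimum of `tr(A*M)` over symmetric matrices `A` with `lam•I ≤ A ≤ Lam•I`. -/
noncomputable def pucciMinus (n : ℕ) (lam Lam : ℝ) (M : Matrix (Fin n) (Fin n) ℝ) : ℝ :=
  sInf { t : ℝ | ∃ A : Matrix (Fin n) (Fin n) ℝ, A.IsSymm ∧
    (A - lam • (1 : Matrix (Fin n) (Fin n) ℝ)).PosSemidef ∧
    (Lam • (1 : Matrix (Fin n) (Fin n) ℝ) - A).PosSemidef ∧ t = (A * M).trace }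

/-- The Pucci maximal extremal operator `𝓜⁺(M)`. -/
noncomputable def pucciPlus (n : ℕ) (lam Lam : ℝ) (M : Matrix (Fin n) (Fin n) ℝ) : ℝ :=
  sSup { t : ℝ | ∃ A : Matrix (Fin n) (Fin n) ℝ, A.IsSymm ∧
    (A - lam • (1 : Matrix (Fin n) (Fin n) ℝ)).PosSemidef ∧
    (Lam • (1 : Matrix (Fin n) (Fin n) ℝ) - A).PosSemidef ∧ t = (A * M).trace }

/-- The Hessian matrix `D²u(x)` of `u` at `x`. -/
noncomputable def hess (n : ℕ) (u : EuclideanSpace ℝ (Fin n) → ℝ)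
    (x : EuclideanSpace ℝ (Fin n)) : Matrix (Fin n) (Fin n) ℝ :=
  fun i j => fderiv ℝ (fun y => fderiv ℝ u y (EuclideanSpace.single j (1 : ℝ))) x
    (EuclideanSpace.single i (1 : ℝ))

/-- The euclidean norm `|Du(x)|` of the gradient of `u` at `x`. -/
noncomputable def gradNorm (n : ℕ) (u : EuclideanSpace ℝ (Fin n) → ℝ)
    (x : EuclideanSpace ℝ (Fin n)) : ℝ := ‖fderiv ℝ u x‖

/-- The `L^p` norm `(∫_E |g|^p)^(1/p)`, as a Lebesgue integral valued in `[0,∞]`. -/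
noncomputable def LpNormE (n : ℕ) (p : ℝ) (g : EuclideanSpace ℝ (Fin n) → ℝ)
    (E : Set (EuclideanSpace ℝ (Fin n))) : ℝ≥0∞ :=
  (∫⁻ x in E, ENNReal.ofReal (|g x| ^ p)) ^ (1 / p)

/-- The last (`n`-th) coordinate `x_n` of a point of `ℝⁿ`. -/
def lastC (n : ℕ) (hn : 1 ≤ n) (x : EuclideanSpace ℝ (Fin n)) : ℝ := x ⟨n - 1, by omega⟩

/-- The open half-ball `B_R⁺ = {|x| < R, x_n > 0}`. -/
def halfBall (n : ℕ) (hn : 1 ≤ n) (R : ℝ) : Set (EuclideanSpace ℝ (Fin n)) :=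
  {x | ‖x‖ < R ∧ 0 < lastC n hn x}

/-- The flat boundary part `B_R⁰ = {|x| ≤ R, x_n = 0}`. -/
def flatB (n : ℕ) (hn : 1 ≤ n) (R : ℝ) : Set (EuclideanSpace ℝ (Fin n)) :=
  {x | ‖x‖ ≤ R ∧ lastC n hn x = 0}

/-- The norm `‖g‖_{L^{p,q}(B_R⁺)} = ‖g‖_{L^p(B_R⁺)} + ‖g‖_{L^q(B_R⁺ ∩ {x_n < d0})}`. -/
noncomputable def LpqNormHB (n : ℕ) (hn : 1 ≤ n) (p q d0 R : ℝ)
    (g : EuclideanSpace ℝ (Fin n) → ℝ) : ℝ≥0∞ :=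
  LpNormE n p g (halfBall n hn R) +
    LpNormE n q g {x ∈ halfBall n hn R | lastC n hn x < d0}

/-- The open cube `Q_ρ` of side `ρ` centered at `(0,…,0,ρ/2)`. -/
def cubeQ (n : ℕ) (hn : 1 ≤ n) (ρ : ℝ) : Set (EuclideanSpace ℝ (Fin n)) :=
  {x | (∀ i : Fin n, i.1 ≠ n - 1 → |x i| < ρ / 2) ∧ 0 < lastC n hn x ∧ lastC n hn x < ρ}

/-- The norm `‖g‖_{L^{p,q}(Q₂)} = ‖g‖_{L^p(Q₂)} + ‖g‖_{L^q(Q₂ ∩ {x_n < d0})}`. -/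
noncomputable def LpqNormQ (n : ℕ) (hn : 1 ≤ n) (p q d0 : ℝ)
    (g : EuclideanSpace ℝ (Fin n) → ℝ) : ℝ≥0∞ :=
  LpNormE n p g (cubeQ n hn 2) +
    LpNormE n q g {x ∈ cubeQ n hn 2 | lastC n hn x < d0}

open scoped MatrixOrder Matrix.Norms.L2Operator in
lemma bgl_trace_mul_nonneg {n : ℕ} {A B : Matrix (Fin n) (Fin n) ℝ} (hA : A.PosSemidef)
    (hB : B.PosSemidef) : 0 ≤ (A * B).trace := by
  obtain ⟨C, hC⟩ := CStarAlgebra.nonneg_iff_eq_star_mul_self.mp hB.nonneg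
  rw [Matrix.star_eq_conjTranspose] at hC
  rw [hC, ← Matrix.mul_assoc, Matrix.trace_mul_comm, ← Matrix.mul_assoc]
  exact (hA.mul_mul_conjTranspose_same C).trace_nonneg

/-- admissible coefficient matrices -/
def BglAdm (n : ℕ) (lam Lam : ℝ) (A : Matrix (Fin n) (Fin n) ℝ) : Prop :=
  A.IsSymm ∧ (A - lam • (1 : Matrix (Fin n) (Fin n) ℝ)).PosSemidef ∧
    (Lam • (1 : Matrix (Fin n) (Fin n) ℝ) - A).PosSemidef

lemma bgl_pucci_ge {n : ℕ} {lam Lam : ℝ} (hLam : lam ≤ Lam) {M N : Matrix (Fin n) (Fin n) ℝ}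
    {c : ℝ} (hW : (M - N).PosSemidef) (hc : ∀ A, BglAdm n lam Lam A → c ≤ (A * N).trace) :
    lam * (M - N).trace + c ≤ pucciMinus n lam Lam M := by
  unfold pucciMinus
  apply le_csInf
  · refine ⟨_, lam • (1 : Matrix (Fin n) (Fin n) ℝ), ?_, ?_, ?_, rfl⟩
    · simp [Matrix.IsSymm]
    · simpa using Matrix.PosSemidef.zero
    · rw [← sub_smul]
      exact Matrix.PosSemidef.one.smul (sub_nonneg.2 hLam)
  · rintro t ⟨A, h1, h2, h3, rfl⟩
    have h4 := hc A ⟨h1, h2, h3⟩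
    have h5 := bgl_trace_mul_nonneg h2 hW
    have : (A * M).trace = ((A - lam • (1 : Matrix (Fin n) (Fin n) ℝ)) * (M - N)).trace
        + lam * (M - N).trace + (A * N).trace := by
      simp [Matrix.sub_mul, Matrix.mul_sub, Matrix.trace_sub]
      ring
    linarith

lemma bgl_det_le {n : ℕ} {W : Matrix (Fin n) (Fin n) ℝ} (hW : W.PosSemidef) :
    |W.det| ≤ W.trace ^ n := by
  have h1 := hW.isHermitian.det_eq_prod_eigenvalues
  have h2 := hW.isHermitian.trace_eq_sum_eigenvalues
  simp only [RCLike.ofReal_real_eq_id, id] at h1 h2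
  rw [h1, h2, abs_of_nonneg (Finset.prod_nonneg fun i _ => hW.eigenvalues_nonneg i)]
  calc _ ≤ ∏ i : Fin n, ∑ j, hW.isHermitian.eigenvalues j := by
        apply Finset.prod_le_prod (fun i _ => hW.eigenvalues_nonneg i)
        intro i _
        exact Finset.single_le_sum (f := hW.isHermitian.eigenvalues)
          (fun j _ => hW.eigenvalues_nonneg j) (Finset.mem_univ i)
    _ = _ := by simp

abbrev BE (n : ℕ) := EuclideanSpace ℝ (Fin n)

lemma bgl_hess_eq {n : ℕ} {w : BE n → ℝ} {x : BE n} (hw : ContDiffAt ℝ 2 w x) (i j : Fin n) :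
    hess n w x i j = fderiv ℝ (fderiv ℝ w) x (EuclideanSpace.single i 1)
      (EuclideanSpace.single j 1) := by
  unfold hess
  have h : DifferentiableAt ℝ (fderiv ℝ w) x :=
    (hw.fderiv_right (m := 1) (by norm_num)).differentiableAt (by norm_num)
  rw [fderiv_clm_apply h (differentiableAt_const _)]
  simp

lemma bgl_hess_sub {n : ℕ} {u ψ : BE n → ℝ} {x : BE n} (hu : ContDiffAt ℝ 2 u x)
    (hψ : ContDiffAt ℝ 2 ψ x) : hess n (fun y => u y - ψ y) x = hess n u x - hess n ψ x := by
  ext i j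
  have hw : ContDiffAt ℝ 2 (fun y => u y - ψ y) x := hu.sub hψ
  rw [Matrix.sub_apply, bgl_hess_eq hw, bgl_hess_eq hu, bgl_hess_eq hψ]
  have h1 : DifferentiableAt ℝ (fderiv ℝ u) x :=
    (hu.fderiv_right (m := 1) (by norm_num)).differentiableAt (by norm_num)
  have h2 : DifferentiableAt ℝ (fderiv ℝ ψ) x :=
    (hψ.fderiv_right (m := 1) (by norm_num)).differentiableAt (by norm_num)
  have e : fderiv ℝ (fun y => u y - ψ y) =ᶠ[nhds x] fun y => fderiv ℝ u y - fderiv ℝ ψ y := by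
    filter_upwards [hu.eventually (by norm_num), hψ.eventually (by norm_num)] with y h3 h4
    exact fderiv_fun_sub (h3.differentiableAt (by norm_num)) (h4.differentiableAt (by norm_num))
  rw [e.fderiv_eq, fderiv_fun_sub h1 h2]
  simp

lemma bgl_hess_quad {n : ℕ} {w : BE n → ℝ} {x : BE n} (hw : ContDiffAt ℝ 2 w x)
    (v : BE n) : fderiv ℝ (fderiv ℝ w) x v v = v.ofLp ⬝ᵥ (hess n w x).mulVec v.ofLp := by
  have hv : v = ∑ i, v i • EuclideanSpace.single i (1:ℝ) := by
    ext j; simp [Finset.sum_apply, Pi.single_apply]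
  conv_lhs => rw [hv]
  simp only [map_sum, map_smul, _root_.sum_apply, _root_.smul_apply,
    dotProduct, Matrix.mulVec, Finset.mul_sum, bgl_hess_eq hw, smul_eq_mul]
  rw [Finset.sum_comm]
  refine Finset.sum_congr rfl fun i _ => Finset.sum_congr rfl fun j _ => by ring

lemma bgl_hess_symm {n : ℕ} {w : BE n → ℝ} {x : BE n} (hw : ContDiffAt ℝ 2 w x) :
    (hess n w x).IsHermitian := by
  have := hw.isSymmSndFDerivAt (by simp)
  ext i j
  rw [Matrix.conjTranspose_apply, bgl_hess_eq hw, bgl_hess_eq hw]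
  simpa using this _ _

lemma bgl_psd_iff {n : ℕ} {w : BE n → ℝ} {x : BE n} (hw : ContDiffAt ℝ 2 w x) :
    (hess n w x).PosSemidef ↔ ∀ v, 0 ≤ fderiv ℝ (fderiv ℝ w) x v v := by
  rw [Matrix.posSemidef_iff_dotProduct_mulVec]
  constructor
  · rintro ⟨_, h⟩ v
    rw [bgl_hess_quad hw]
    simpa using h v.ofLp
  · intro h
    refine ⟨bgl_hess_symm hw, fun v => ?_⟩
    have := h (WithLp.toLp 2 v)
    rw [bgl_hess_quad hw] at this
    simpa using this

/-- the Riesz isomorphism as a linear map -/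
noncomputable def bglJ (n : ℕ) : (BE n →L[ℝ] ℝ) →L[ℝ] BE n :=
  LinearMap.toContinuousLinearMap
    { toFun := fun φ => (InnerProductSpace.toDual ℝ (BE n)).symm φ
      map_add' := fun a b => map_add _ a b
      map_smul' := fun c a => by simp }

lemma bgl_grad_deriv {n : ℕ} {w : BE n → ℝ} {x : BE n} (hw : ContDiffAt ℝ 2 w x) :
    HasFDerivAt (gradient w)
      ((bglJ n).comp (fderiv ℝ (fderiv ℝ w) x)) x := by
  have h : DifferentiableAt ℝ (fderiv ℝ w) x :=
    (hw.fderiv_right (m := 1) (by norm_num)).differentiableAt (by norm_num)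
  exact (bglJ n).hasFDerivAt.comp x h.hasFDerivAt

lemma bgl_grad_det {n : ℕ} {w : BE n → ℝ} {x : BE n} (hw : ContDiffAt ℝ 2 w x) :
    ((bglJ n).comp (fderiv ℝ (fderiv ℝ w) x)).det = (hess n w x).det := by
  rw [ContinuousLinearMap.det, ← LinearMap.det_toMatrix (EuclideanSpace.basisFun (Fin n) ℝ).toBasis,
    ← Matrix.det_transpose]
  congr 1
  ext i j
  rw [bgl_hess_eq hw, Matrix.transpose_apply, LinearMap.toMatrix_apply]
  simp only [OrthonormalBasis.coe_toBasis, OrthonormalBasis.coe_toBasis_repr_apply]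
  rw [OrthonormalBasis.repr_apply_apply]
  simp only [EuclideanSpace.basisFun_apply]
  rw [real_inner_comm]
  change inner ℝ ((InnerProductSpace.toDual ℝ (BE n)).symm _) _ = _
  rw [InnerProductSpace.toDual_symm_apply]
  rfl

/-- second order necessary condition -/
lemma bgl_second_order {n : ℕ} {w : BE n → ℝ} {x : BE n} (hw : ContDiffAt ℝ 2 w x)
    (P : BE n →L[ℝ] ℝ) (hmin : IsLocalMin (fun y => w y - P y) x) :
    fderiv ℝ w x = P ∧ (hess n w x).PosSemidef := by
  have hd : DifferentiableAt ℝ w x := hw.differentiableAt (by norm_num)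
  have hP : fderiv ℝ w x = P := by
    have h := hmin.fderiv_eq_zero
    rw [fderiv_fun_sub hd P.differentiableAt, P.fderiv] at h
    exact sub_eq_zero.1 h
  refine ⟨hP, (bgl_psd_iff hw).2 fun v => ?_⟩
  by_contra hneg
  push Not at hneg
  set φ : ℝ → ℝ := fun t => w (x + t • v) - P (x + t • v) with hφ
  have hline : ∀ t : ℝ, HasDerivAt (fun t : ℝ => x + t • v) v t := fun t => by
    simpa using ((hasDerivAt_id t).smul_const v).const_add x
  have hcont : Filter.Tendsto (fun t : ℝ => x + t • v) (nhds 0) (nhds x) := by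
    have := (hline 0).continuousAt.tendsto
    simpa using this
  have hmin' : IsLocalMin φ 0 := by
    have : ∀ᶠ t in nhds (0:ℝ), w x - P x ≤ w (x + t • v) - P (x + t • v) := hcont.eventually hmin
    filter_upwards [this] with t ht
    simpa [hφ] using ht
  have hφ' : ∀ᶠ t in nhds (0:ℝ), HasDerivAt φ (fderiv ℝ w (x + t • v) v - P v) t := by
    filter_upwards [hcont.eventually (hw.eventually (by norm_num))] with t ht
    have h1 := (ht.differentiableAt (by norm_num)).hasFDerivAt.comp_hasDerivAt t (hline t)
    have h2 := P.hasFDerivAt.comp_hasDerivAt t (hline t)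
    exact h1.sub h2
  have hdφ : deriv φ =ᶠ[nhds 0] fun t => fderiv ℝ w (x + t • v) v - P v :=
    hφ'.mono fun t ht => ht.deriv
  have h2 : deriv (deriv φ) 0 = fderiv ℝ (fderiv ℝ w) x v v := by
    rw [hdφ.deriv_eq]
    have hD : DifferentiableAt ℝ (fderiv ℝ w) x :=
      (hw.fderiv_right (m := 1) (by norm_num)).differentiableAt (by norm_num)
    have hD' : HasFDerivAt (fderiv ℝ w) (fderiv ℝ (fderiv ℝ w) x) (x + (0:ℝ) • v) := by
      simpa using hD.hasFDerivAt
    have h3 := hD'.comp_hasDerivAt (0:ℝ) (hline 0)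
    have h4 := (h3.clm_apply (hasDerivAt_const (0:ℝ) v)).sub_const (P v)
    simpa using h4.deriv
  have h0 : deriv φ 0 = 0 := hmin'.deriv_eq_zero
  have hmax : IsLocalMax φ 0 := isLocalMax_of_deriv_deriv_neg (by rw [h2]; exact hneg) h0
    hφ'.self_of_nhds.continuousAt
  have hconst : φ =ᶠ[nhds 0] fun _ => φ 0 := by
    filter_upwards [hmin', hmax] with t h5 h6
    exact le_antisymm h6 h5
  have : deriv (deriv φ) 0 = 0 := by
    have h7 : deriv φ =ᶠ[nhds 0] fun _ => 0 := by
      have := hconst.eventuallyEq_nhds.mono fun t ht => ht.deriv_eq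
      filter_upwards [this] with t ht
      simpa using ht
    rw [h7.deriv_eq]; simp
  linarith

/-- standing assumptions: `u ≥ 0` is a supersolution in `U` -/
structure BglSuper (n : ℕ) (lam Lam : ℝ) (U : Set (BE n)) (b f u : BE n → ℝ) : Prop where
  hlam : 0 < lam
  hLam : lam ≤ Lam
  isOpen : IsOpen U
  bcont : ContinuousOn b U
  fcont : ContinuousOn f U
  b0 : ∀ x ∈ U, 0 ≤ b x
  f0 : ∀ x ∈ U, 0 ≤ f x
  u2 : ContDiffOn ℝ 2 u U
  u0 : ∀ x ∈ U, 0 ≤ u x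
  eq : ∀ x ∈ U, pucciMinus n lam Lam (hess n u x) - b x * gradNorm n u x ≤ f x

lemma bgl_abp {n : ℕ} {lam Lam : ℝ} {U : Set (BE n)} {b f u : BE n → ℝ}
    (H : BglSuper n lam Lam U b f u) {K : Set (BE n)} (hK : IsCompact K) (hKU : K ⊆ U)
    {ψ g : BE n → ℝ} (hψ : ContDiff ℝ 2 ψ) {L : ℝ} (hL : ∀ x ∈ K, ‖fderiv ℝ ψ x‖ ≤ L)
    (hg : ∀ x ∈ K, ∀ A, BglAdm n lam Lam A → -g x ≤ (A * hess n ψ x).trace)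
    {d m : ℝ} (hd : 0 < d) (hm : 0 < m) (hdist : ∀ x ∈ K, ∀ y ∈ K, dist x y ≤ d)
    (hbd : ∀ x ∈ K, x ∉ interior K → ψ x ≤ u x) {x0 : BE n} (hx0 : x0 ∈ K)
    (hum : u x0 - ψ x0 ≤ -m) :
    volume (Metric.ball (0 : BE n) (m / d)) ≤
      ∫⁻ x in {x | x ∈ K ∧ u x ≤ ψ x},
        ENNReal.ofReal (((b x * (m / d + L) + f x + g x) / lam) ^ n) := by
  set w : BE n → ℝ := fun y => u y - ψ y with hw
  have hwU : ContDiffOn ℝ 2 w U := H.u2.sub hψ.contDiffOn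
  have hwat : ∀ x ∈ U, ContDiffAt ℝ 2 w x := fun x hx => hwU.contDiffAt (H.isOpen.mem_nhds hx)
  have huat : ∀ x ∈ U, ContDiffAt ℝ 2 u x := fun x hx => H.u2.contDiffAt (H.isOpen.mem_nhds hx)
  have c0 : ContinuousOn w K := hwU.continuousOn.mono hKU
  have hw1 : ContDiffOn ℝ 1 (fderiv ℝ w) U := hwU.fderiv_of_isOpen H.isOpen (by norm_num)
  have c1 : ContinuousOn (fderiv ℝ w) K := hw1.continuousOn.mono hKU
  have c2 : ContinuousOn (fderiv ℝ (fderiv ℝ w)) K :=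
    (hw1.continuousOn_fderiv_of_isOpen H.isOpen (by norm_num)).mono hKU
  set Γ : Set (BE n) := {x | x ∈ K ∧ w x ≤ 0 ∧ ‖fderiv ℝ w x‖ ≤ m / d ∧
    ∀ v, 0 ≤ fderiv ℝ (fderiv ℝ w) x v v} with hΓ
  have hΓc : IsClosed Γ := by
    have e : Γ = (K ∩ w ⁻¹' Set.Iic 0) ∩ (K ∩ (fun x => ‖fderiv ℝ w x‖) ⁻¹' Set.Iic (m / d)) ∩
        (K ∩ fderiv ℝ (fderiv ℝ w) ⁻¹' {T | ∀ v, 0 ≤ T v v}) := by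
      ext x; simp [hΓ]; tauto
    rw [e]
    refine ((c0.preimage_isClosed_of_isClosed hK.isClosed isClosed_Iic).inter
      (c1.norm.preimage_isClosed_of_isClosed hK.isClosed isClosed_Iic)).inter
      (c2.preimage_isClosed_of_isClosed hK.isClosed ?_)
    rw [Set.ofPred_forall]
    refine isClosed_iInter fun v => ?_
    refine isClosed_le continuous_const ?_
    exact ((ContinuousLinearMap.apply ℝ ℝ v).continuous.comp
      (ContinuousLinearMap.apply ℝ (BE n →L[ℝ] ℝ) v).continuous)
  have himg : Metric.ball (0 : BE n) (m / d) ⊆ gradient w '' Γ := by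
    intro p hp
    rw [mem_ball_zero_iff] at hp
    set P : BE n →L[ℝ] ℝ := InnerProductSpace.toDual ℝ (BE n) p with hP
    have hPn : ‖P‖ = ‖p‖ := by simp [hP]
    obtain ⟨x1, hx1, hmin⟩ := hK.exists_isMinOn ⟨x0, hx0⟩
      (c0.sub P.continuous.continuousOn)
    have h1 : w x1 - P x1 ≤ w x0 - P x0 := hmin hx0
    have h2 : P x1 - P x0 < m := by
      calc P x1 - P x0 = P (x1 - x0) := by simp
        _ ≤ ‖P (x1 - x0)‖ := le_abs_self _
        _ ≤ ‖P‖ * ‖x1 - x0‖ := P.le_opNorm _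
        _ ≤ ‖p‖ * d := by
          rw [hPn, ← dist_eq_norm]
          exact mul_le_mul_of_nonneg_left (hdist _ hx1 _ hx0) (norm_nonneg _)
        _ < m := by rwa [lt_div_iff₀ hd] at hp
    have h3 : w x0 ≤ -m := hum
    have h4 : w x1 < 0 := by linarith
    have hint : x1 ∈ interior K := by
      by_contra hni
      have := hbd x1 hx1 hni
      simp only [hw] at h4
      linarith
    have hloc : IsLocalMin (fun y => w y - P y) x1 := by
      filter_upwards [mem_interior_iff_mem_nhds.1 hint] with y hy
      exact hmin hy
    obtain ⟨h5, h6⟩ := bgl_second_order (hwat x1 (hKU hx1)) P hloc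
    refine ⟨x1, ⟨hx1, h4.le, ?_, (bgl_psd_iff (hwat x1 (hKU hx1))).1 h6⟩, ?_⟩
    · rw [h5, hPn]; exact hp.le
    · rw [gradient, h5, hP]; simp
  calc volume (Metric.ball (0 : BE n) (m / d)) ≤ volume (gradient w '' Γ) := measure_mono himg
    _ ≤ ∫⁻ x in Γ, ENNReal.ofReal |((bglJ n).comp (fderiv ℝ (fderiv ℝ w) x)).det| :=
      addHaar_image_le_lintegral_abs_det_fderiv volume hΓc.measurableSet
        fun x hx => (bgl_grad_deriv (hwat x (hKU hx.1))).hasFDerivWithinAt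
    _ ≤ ∫⁻ x in Γ, ENNReal.ofReal (((b x * (m / d + L) + f x + g x) / lam) ^ n) := by
      refine setLIntegral_mono' hΓc.measurableSet fun x hx => ?_
      apply ENNReal.ofReal_le_ofReal
      obtain ⟨hxK, -, hx2, hx3⟩ := hx
      have hxU := hKU hxK
      rw [bgl_grad_det (hwat x hxU)]
      have hpsd := (bgl_psd_iff (hwat x hxU)).2 hx3
      refine (bgl_det_le hpsd).trans ?_
      refine pow_le_pow_left₀ hpsd.trace_nonneg ?_ n
      rw [le_div_iff₀ H.hlam]
      have hs := bgl_hess_sub (huat x hxU) hψ.contDiffAt (x := x)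
      have hpsd' : (hess n u x - hess n ψ x).PosSemidef := by rw [← hs]; exact hpsd
      have h7 := bgl_pucci_ge H.hLam hpsd' (hg x hxK)
      have h8 := H.eq x hxU
      have h9 : gradNorm n u x ≤ m / d + L := by
        have : fderiv ℝ w x = fderiv ℝ u x - fderiv ℝ ψ x :=
          fderiv_fun_sub ((huat x hxU).differentiableAt (by norm_num))
            (hψ.contDiffAt.differentiableAt (by norm_num))
        have e : fderiv ℝ u x = fderiv ℝ w x + fderiv ℝ ψ x := by rw [this]; simp
        rw [gradNorm, e]
        exact (norm_add_le _ _).trans (add_le_add hx2 (hL x hxK))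
      have h10 := mul_le_mul_of_nonneg_left h9 (H.b0 x hxU)
      rw [hs]
      linarith
    _ ≤ _ := by
      refine lintegral_mono_set ?_
      intro x hx
      have := hx.2.1
      simp only [hw] at this
      exact ⟨hx.1, by linarith⟩

lemma bgl_pow3 (x y z : ℝ) (hx : 0 ≤ x) (hy : 0 ≤ y) (hz : 0 ≤ z) (n : ℕ) :
    (x + y + z) ^ n ≤ 3 ^ n * (x ^ n + y ^ n + z ^ n) := by
  have hx' := pow_nonneg hx n
  have hy' := pow_nonneg hy n
  have hz' := pow_nonneg hz n
  have key : ∀ t : ℝ, 0 ≤ t → x ≤ t → y ≤ t → z ≤ t → (x + y + z) ^ n ≤ 3 ^ n * t ^ n := by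
    intro t _ h1 h2 h3
    rw [← mul_pow]
    exact pow_le_pow_left₀ (by positivity) (by linarith) n
  have h3 : (0:ℝ) < 3 ^ n := by positivity
  rcases le_total x y with h | h <;> rcases le_total y z with h' | h' <;>
    rcases le_total x z with h'' | h''
  all_goals first
    | exact (key x hx (by linarith) (by linarith) (by linarith)).trans (by gcongr; linarith)
    | exact (key y hy (by linarith) (by linarith) (by linarith)).trans (by gcongr; linarith)
    | exact (key z hz (by linarith) (by linarith) (by linarith)).trans (by gcongr; linarith)

lemma bgl_abp' {n : ℕ} (hn : 2 ≤ n) {lam Lam : ℝ} {U : Set (BE n)} {b f u : BE n → ℝ}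
    (H : BglSuper n lam Lam U b f u) {K : Set (BE n)} (hK : IsCompact K) (hKU : K ⊆ U)
    {ψ : BE n → ℝ} (hψ : ContDiff ℝ 2 ψ) {L : ℝ} (hL : ∀ x ∈ K, ‖fderiv ℝ ψ x‖ ≤ L)
    {g0 : ℝ} (hg0 : 0 ≤ g0) {S : Set (BE n)} (hS : IsClosed S)
    (hg : ∀ x ∈ K, ∀ A, BglAdm n lam Lam A →
      -(S.indicator (fun _ => g0) x) ≤ (A * hess n ψ x).trace)
    {d m : ℝ} (hd : 0 < d) (hm : 0 < m) (hdist : ∀ x ∈ K, ∀ y ∈ K, dist x y ≤ d)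
    (hbd : ∀ x ∈ K, x ∉ interior K → ψ x ≤ u x) {x0 : BE n} (hx0 : x0 ∈ K)
    (hum : u x0 - ψ x0 ≤ -m) :
    ENNReal.ofReal ((m / d) ^ n) * volume (Metric.ball (0 : BE n) 1) ≤
      ENNReal.ofReal ((3 / lam) ^ n) * (ENNReal.ofReal ((m / d + L) ^ n) *
        (∫⁻ x in K, ENNReal.ofReal (b x ^ n)) + (∫⁻ x in K, ENNReal.ofReal (f x ^ n)) +
        ENNReal.ofReal (g0 ^ n) * volume {x | x ∈ S ∧ u x ≤ ψ x}) := by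
  have hL0 : 0 ≤ L := (norm_nonneg _).trans (hL x0 hx0)
  have hl := H.hlam
  have hmd : 0 ≤ m / d + L := by positivity
  have : Nonempty (Fin n) := ⟨⟨0, by omega⟩⟩
  have h1 := bgl_abp H hK hKU hψ hL hg hd hm hdist hbd hx0 hum
  rw [Measure.addHaar_ball volume 0 (by positivity : 0 ≤ m / d)] at h1
  simp only [finrank_euclideanSpace, Fintype.card_fin] at h1
  refine h1.trans ?_
  set T : Set (BE n) := {x | x ∈ K ∧ u x ≤ ψ x} with hT
  have hTK : T ⊆ K := fun x hx => hx.1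
  have hTm : MeasurableSet T := by
    have : T = K ∩ (fun x => u x - ψ x) ⁻¹' Set.Iic 0 := by ext x; simp [hT]
    rw [this]
    exact ((((H.u2.continuousOn.mono hKU).sub
      hψ.continuous.continuousOn).preimage_isClosed_of_isClosed hK.isClosed isClosed_Iic)).measurableSet
  have hbm : AEMeasurable (fun x => ENNReal.ofReal (b x ^ n)) (volume.restrict T) :=
    (((H.bcont.mono (hTK.trans hKU)).pow n).aemeasurable hTm).ennreal_ofReal
  have hfm : AEMeasurable (fun x => ENNReal.ofReal (f x ^ n)) (volume.restrict T) :=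
    (((H.fcont.mono (hTK.trans hKU)).pow n).aemeasurable hTm).ennreal_ofReal
  calc _ ≤ ∫⁻ x in T, ENNReal.ofReal ((3 / lam) ^ n) * (ENNReal.ofReal ((m / d + L) ^ n) *
        ENNReal.ofReal (b x ^ n) + ENNReal.ofReal (f x ^ n) +
        S.indicator (fun _ => ENNReal.ofReal (g0 ^ n)) x) := by
        refine setLIntegral_mono' hTm fun x hx => ?_
        have hb := H.b0 x (hKU hx.1)
        have hf := H.f0 x (hKU hx.1)
        have hi : 0 ≤ S.indicator (fun _ => g0) x := Set.indicator_nonneg (fun _ _ => hg0) x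
        have e : S.indicator (fun _ => ENNReal.ofReal (g0 ^ n)) x =
            ENNReal.ofReal ((S.indicator (fun _ => g0) x) ^ n) := by
          by_cases hxS : x ∈ S
          · simp [hxS]
          · simp [hxS, show n ≠ 0 by omega]
        rw [e, ← ENNReal.ofReal_mul (by positivity), ← ENNReal.ofReal_add (by positivity)
          (by positivity), ← ENNReal.ofReal_add (by positivity) (by positivity),
          ← ENNReal.ofReal_mul (by positivity)]
        apply ENNReal.ofReal_le_ofReal
        rw [div_pow, div_pow, div_mul_eq_mul_div]
        gcongr
        refine (bgl_pow3 _ _ _ (by positivity) hf hi n).trans_eq ?_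
        rw [mul_pow]; ring
    _ = ENNReal.ofReal ((3 / lam) ^ n) * (ENNReal.ofReal ((m / d + L) ^ n) *
        (∫⁻ x in T, ENNReal.ofReal (b x ^ n)) + (∫⁻ x in T, ENNReal.ofReal (f x ^ n)) +
        ENNReal.ofReal (g0 ^ n) * volume (S ∩ T)) := by
        rw [lintegral_const_mul' _ _ ENNReal.ofReal_ne_top, lintegral_add_left',
          lintegral_add_left', lintegral_const_mul' _ _ ENNReal.ofReal_ne_top,
          lintegral_indicator_const hS.measurableSet, Measure.restrict_apply hS.measurableSet]
        · exact hbm.const_mul _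
        · exact (hbm.const_mul _).add hfm
    _ ≤ _ := by
        gcongr
        exact fun x hx => ⟨hx.1, hx.2.2⟩

lemma bgl_adm_quad {n : ℕ} {lam Lam : ℝ} {A : Matrix (Fin n) (Fin n) ℝ}
    (hA : BglAdm n lam Lam A) (y : Fin n → ℝ) :
    lam * ∑ i, y i ^ 2 ≤ ∑ i, ∑ j, A i j * (y i * y j) := by
  have h := (Matrix.posSemidef_iff_dotProduct_mulVec.1 hA.2.1).2 y
  have e : star y ⬝ᵥ (A - lam • (1 : Matrix (Fin n) (Fin n) ℝ)).mulVec y =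
      (∑ i, ∑ j, A i j * (y i * y j)) - lam * ∑ i, y i ^ 2 := by
    rw [Matrix.sub_mulVec, dotProduct_sub, Matrix.smul_mulVec, Matrix.one_mulVec]
    congr 1
    · simp only [dotProduct, Matrix.mulVec, Finset.mul_sum, Pi.star_apply, star_trivial]
      refine Finset.sum_congr rfl fun i _ => Finset.sum_congr rfl fun j _ => by ring
    · simp only [dotProduct, Finset.mul_sum, Pi.star_apply, star_trivial, Pi.smul_apply, smul_eq_mul]
      refine Finset.sum_congr rfl fun i _ => by ring
  rw [e] at h
  linarith

lemma bgl_adm_diag {n : ℕ} {lam Lam : ℝ} {A : Matrix (Fin n) (Fin n) ℝ}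
    (hA : BglAdm n lam Lam A) (i : Fin n) : lam ≤ A i i ∧ A i i ≤ Lam := by
  have h1 := hA.2.1.diag_nonneg (i := i)
  have h2 := hA.2.2.diag_nonneg (i := i)
  simp at h1 h2
  exact ⟨h1, h2⟩

lemma bgl_adm_trace {n : ℕ} {lam Lam : ℝ} {A : Matrix (Fin n) (Fin n) ℝ}
    (hA : BglAdm n lam Lam A) : A.trace ≤ n * Lam := by
  have : ∑ i, A i i ≤ ∑ _i : Fin n, Lam := Finset.sum_le_sum fun i _ => (bgl_adm_diag hA i).2
  simpa [Matrix.trace] using this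

/-- Gaussian bump -/
noncomputable def bglGauss (n : ℕ) (T c e : ℝ) (z : BE n) (x : BE n) : ℝ :=
  T * (Real.exp (-(c * ‖x - z‖ ^ 2)) - e)

lemma bgl_gauss_deriv {n : ℕ} (T c e : ℝ) (z x : BE n) :
    HasFDerivAt (bglGauss n T c e z)
      ((-(2 * T * c * Real.exp (-(c * ‖x - z‖ ^ 2)))) • innerSL ℝ (x - z)) x := by
  have h1 : HasFDerivAt (fun y : BE n => ‖y - z‖ ^ 2) (2 • (innerSL ℝ (x - z))) x := by
    have := ((hasFDerivAt_id x).sub_const z).norm_sq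
    simpa using this
  have h2 := (((h1.const_mul c).neg.exp).sub_const e).const_mul T
  refine h2.congr_fderiv ?_
  ext v
  simp
  ring

lemma bgl_gauss_contDiff {n : ℕ} (T c e : ℝ) (z : BE n) : ContDiff ℝ 2 (bglGauss n T c e z) := by
  unfold bglGauss
  have : ContDiff ℝ 2 (fun x : BE n => ‖x - z‖ ^ 2) := (contDiff_id.sub contDiff_const).norm_sq ℝ
  fun_prop

lemma bgl_gauss_hess {n : ℕ} (T c e : ℝ) (z x : BE n) (i j : Fin n) :
    hess n (bglGauss n T c e z) x i j = T * Real.exp (-(c * ‖x - z‖ ^ 2)) *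
      (4 * c ^ 2 * ((x - z) i * (x - z) j) - 2 * c * (if i = j then 1 else 0)) := by
  unfold hess
  have e1 : (fun y => fderiv ℝ (bglGauss n T c e z) y (EuclideanSpace.single j (1:ℝ))) =
      fun y => (-(2 * c)) * ((bglGauss n T c 0 z) y * (y j - z j)) := by
    ext y
    rw [(bgl_gauss_deriv T c e z y).fderiv]
    simp [bglGauss, EuclideanSpace.inner_single_right]
    ring
  rw [e1]
  have h1 : HasFDerivAt (fun y : BE n => y j - z j) (EuclideanSpace.proj j : BE n →L[ℝ] ℝ) x :=
    (EuclideanSpace.proj j : BE n →L[ℝ] ℝ).hasFDerivAt.sub_const _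
  have h2 : HasFDerivAt (fun y => (-(2 * c)) * ((bglGauss n T c 0 z) y * (y j - z j))) _ x :=
    ((bgl_gauss_deriv T c 0 z x).mul h1).const_mul (-(2 * c))
  rw [h2.fderiv]
  by_cases hij : i = j
  · subst hij
    simp [bglGauss, EuclideanSpace.inner_single_right]
    ring
  · have hij' : ¬ j = i := fun h => hij h.symm
    simp [bglGauss, hij, hij', EuclideanSpace.inner_single_right]
    ring

lemma bgl_gauss_trace {n : ℕ} (T c e : ℝ) (z x : BE n) (A : Matrix (Fin n) (Fin n) ℝ) :
    (A * hess n (bglGauss n T c e z) x).trace = T * Real.exp (-(c * ‖x - z‖ ^ 2)) *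
      (4 * c ^ 2 * (∑ i, ∑ j, A i j * ((x - z) i * (x - z) j)) - 2 * c * A.trace) := by
  simp only [Matrix.trace, Matrix.diag, Matrix.mul_apply, bgl_gauss_hess]
  have : ∀ i : Fin n, A i i = ∑ j, A i j * (if j = i then 1 else 0) := by intro i; simp
  simp only [Finset.mul_sum, mul_sub]
  rw [← Finset.sum_sub_distrib]
  refine Finset.sum_congr rfl fun i _ => ?_
  rw [this i, Finset.mul_sum, Finset.mul_sum, ← Finset.sum_sub_distrib]
  refine Finset.sum_congr rfl fun j _ => by ring

/-- the growth property with given constants -/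
def BglG (n : ℕ) (lam Lam M μ η : ℝ) : Prop :=
    ∀ (U : Set (BE n)) (b f u : BE n → ℝ),
      BglSuper n lam Lam U b f u → ∀ (y z : BE n) (r t : ℝ), 0 < r → 0 < t →
      Metric.closedBall y (6 * r) ⊆ U → dist z y ≤ 5 * r →
      (∫⁻ x in Metric.closedBall y (6 * r), ENNReal.ofReal (b x ^ n)) ≤ ENNReal.ofReal η →
      (∫⁻ x in Metric.closedBall y (6 * r), ENNReal.ofReal (f x ^ n)) ≤
        ENNReal.ofReal (η * (t / r) ^ n) →
      u z ≤ t →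
      ENNReal.ofReal (μ * r ^ n) ≤ volume {x | x ∈ Metric.closedBall y r ∧ u x ≤ M * t}

/-- the basic growth lemma -/
lemma bgl_growth (n : ℕ) (hn : 2 ≤ n) (lam Lam : ℝ) (hlam : 0 < lam) (hLam : lam ≤ Lam) :
    ∃ M μ η : ℝ, 1 ≤ M ∧ 0 < μ ∧ 0 < η ∧ BglG n lam Lam M μ η := by
  have hLam0 : 0 < Lam := hlam.trans_le hLam
  have hn0 : (0:ℝ) < n := by exact_mod_cast (by omega : 0 < n)
  have : Nonempty (Fin n) := ⟨⟨0, by omega⟩⟩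
  set α : ℝ := n * Lam / (2 * lam) with hα
  have hα0 : 0 < α := by positivity
  have hexp : Real.exp (-(36 * α)) < Real.exp (-(25 * α)) := Real.exp_lt_exp.2 (by linarith)
  set D : ℝ := Real.exp (-(25 * α)) - Real.exp (-(36 * α)) with hD
  have hD0 : 0 < D := sub_pos.2 hexp
  have hD1 : D ≤ 1 := by
    have h1 : Real.exp (-(25 * α)) ≤ 1 := Real.exp_le_one_iff.2 (by linarith)
    have h2 := Real.exp_pos (-(36 * α))
    linarith
  set A0 : ℝ := 2 / D with hA0
  have hA00 : 2 ≤ A0 := by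
    rw [hA0, le_div_iff₀ hD0]; linarith
  set ω : ℝ := volume.real (Metric.ball (0 : BE n) 1) with hω
  have hω0 : 0 < ω := ENNReal.toReal_pos (Metric.measure_ball_pos _ _ one_pos).ne' measure_ball_lt_top.ne
  have hωE : volume (Metric.ball (0 : BE n) 1) = ENNReal.ofReal ω := by
    rw [hω, ofReal_measureReal measure_ball_lt_top.ne]
  set c1 : ℝ := 1 / 12 + 12 * α * A0 with hc1
  set c2 : ℝ := 2 * α * n * Lam * A0 with hc2
  have hc10 : 0 < c1 := by positivity
  have hc20 : 0 < c2 := by positivity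
  set B : ℝ := (1 / 12) ^ n * ω with hB
  have hB0 : 0 < B := by positivity
  set η : ℝ := B / 2 / ((3 / lam) ^ n * (c1 ^ n + 1)) with hη
  set μ : ℝ := B / 2 / ((3 / lam) ^ n * c2 ^ n) with hμ
  refine ⟨A0, μ, η, by linarith, by positivity, by positivity, ?_⟩
  intro U b f u H y z r t hr ht hU hz hb hf hut
  have hη0 : 0 < η := by positivity
  set ψ : BE n → ℝ := bglGauss n (t * A0) (α / r ^ 2) (Real.exp (-(36 * α))) y with hψ
  set K := Metric.closedBall y (6 * r) with hK
  have hzK : z ∈ K := by rw [hK, Metric.mem_closedBall]; linarith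
  have hgrad : ∀ x ∈ K, ‖fderiv ℝ ψ x‖ ≤ t / r * (12 * α * A0) := by
    intro x hx
    rw [hψ, (bgl_gauss_deriv _ _ _ y x).fderiv, norm_smul, innerSL_apply_norm, norm_neg,
      Real.norm_eq_abs, abs_of_nonneg (by positivity)]
    rw [hK, Metric.mem_closedBall, dist_eq_norm] at hx
    have h1 : Real.exp (-(α / r ^ 2 * ‖x - y‖ ^ 2)) ≤ 1 :=
      Real.exp_le_one_iff.2 (by rw [neg_nonpos]; positivity)
    calc _ ≤ (2 * (t * A0) * (α / r ^ 2) * 1) * (6 * r) := by gcongr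
      _ = _ := by field_simp; ring
  have hg : ∀ x ∈ K, ∀ A, BglAdm n lam Lam A →
      -((Metric.closedBall y r).indicator (fun _ => t / r ^ 2 * c2) x) ≤
        (A * hess n ψ x).trace := by
    intro x _ A hA
    rw [hψ, bgl_gauss_trace]
    have h1 := bgl_adm_quad hA (fun i => (x - y) i)
    have h2 := bgl_adm_trace hA
    have h3 : ∑ i, (x - y) i ^ 2 = ‖x - y‖ ^ 2 := by
      rw [EuclideanSpace.norm_sq_eq]; simp
    have hE0 := Real.exp_pos (-(α / r ^ 2 * ‖x - y‖ ^ 2))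
    have hE1 : Real.exp (-(α / r ^ 2 * ‖x - y‖ ^ 2)) ≤ 1 :=
      Real.exp_le_one_iff.2 (by rw [neg_nonpos]; positivity)
    set Ex := Real.exp (-(α / r ^ 2 * ‖x - y‖ ^ 2))
    rw [h3] at h1
    have h4 : 4 * (α / r ^ 2) ^ 2 * (lam * ‖x - y‖ ^ 2) - 2 * (α / r ^ 2) * (n * Lam) ≤
        4 * (α / r ^ 2) ^ 2 * (∑ i, ∑ j, A i j * ((x - y) i * (x - y) j))
          - 2 * (α / r ^ 2) * A.trace := by gcongr
    have h5 : 4 * (α / r ^ 2) ^ 2 * (lam * ‖x - y‖ ^ 2) - 2 * (α / r ^ 2) * (n * Lam) =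
        2 * (α / r ^ 2) * (n * Lam) * (‖x - y‖ ^ 2 / r ^ 2 - 1) := by
      rw [hα]; field_simp; ring
    rw [h5] at h4
    by_cases hx : x ∈ Metric.closedBall y r
    · rw [Set.indicator_of_mem hx]
      calc -(t / r ^ 2 * c2) = -(t * A0 * 1 * (2 * (α / r ^ 2) * (n * Lam))) := by
            rw [hc2]; field_simp
        _ ≤ -(t * A0 * Ex * (2 * (α / r ^ 2) * (n * Lam))) := by
            rw [neg_le_neg_iff]; gcongr
        _ = t * A0 * Ex * (2 * (α / r ^ 2) * (n * Lam) * (0 - 1)) := by ring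
        _ ≤ t * A0 * Ex * (2 * (α / r ^ 2) * (n * Lam) * (‖x - y‖ ^ 2 / r ^ 2 - 1)) := by
            gcongr; positivity
        _ ≤ _ := by gcongr
    · rw [Set.indicator_of_notMem hx, neg_zero]
      rw [Metric.mem_closedBall, dist_eq_norm, not_le] at hx
      have h6 : 1 ≤ ‖x - y‖ ^ 2 / r ^ 2 := by
        rw [le_div_iff₀ (by positivity), one_mul]; gcongr
      have h7 : 0 ≤ 2 * (α / r ^ 2) * (n * Lam) * (‖x - y‖ ^ 2 / r ^ 2 - 1) :=
        mul_nonneg (by positivity) (by linarith)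
      exact mul_nonneg (by positivity) (h7.trans h4)
  have hbd : ∀ x ∈ K, x ∉ interior K → ψ x ≤ u x := by
    intro x hx hxi
    have h1 : 6 * r ≤ ‖x - y‖ := by
      by_contra hlt
      push Not at hlt
      apply hxi
      rw [hK]
      apply Metric.ball_subset_interior_closedBall
      rwa [Metric.mem_ball, dist_eq_norm]
    refine le_trans ?_ (H.u0 x (hU hx))
    rw [hψ, bglGauss]
    apply mul_nonpos_of_nonneg_of_nonpos (by positivity)
    rw [sub_nonpos]
    apply Real.exp_le_exp.2
    rw [neg_le_neg_iff]
    calc 36 * α = α / r ^ 2 * (6 * r) ^ 2 := by field_simp; ring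
      _ ≤ _ := by gcongr
  have hum : u z - ψ z ≤ -t := by
    have h1 : 2 * t ≤ ψ z := by
      rw [hψ, bglGauss]
      rw [dist_eq_norm] at hz
      have h2 : Real.exp (-(25 * α)) ≤ Real.exp (-(α / r ^ 2 * ‖z - y‖ ^ 2)) := by
        apply Real.exp_le_exp.2
        rw [neg_le_neg_iff]
        calc α / r ^ 2 * ‖z - y‖ ^ 2 ≤ α / r ^ 2 * (5 * r) ^ 2 := by gcongr
          _ = _ := by field_simp; ring
      calc 2 * t = t * A0 * D := by rw [hA0]; field_simp
        _ ≤ _ := by rw [hD]; gcongr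
    linarith
  have hdist : ∀ x ∈ K, ∀ x' ∈ K, dist x x' ≤ 12 * r := by
    intro x hx x' hx'
    rw [hK, Metric.mem_closedBall] at hx hx'
    have := dist_triangle_right x x' y
    linarith
  have key := bgl_abp' hn H (isCompact_closedBall y (6 * r)) hU (bgl_gauss_contDiff _ _ _ y)
    hgrad (by positivity : 0 ≤ t / r ^ 2 * c2) Metric.isClosed_closedBall hg
    (by positivity : 0 < 12 * r) ht hdist hbd hzK hum
  set V := volume {x | x ∈ Metric.closedBall y r ∧ u x ≤ ψ x} with hV
  have hVtop : V ≠ ⊤ := by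
    refine ((measure_mono ?_).trans_lt (measure_closedBall_lt_top (x := y) (r := r))).ne
    exact fun x hx => hx.1
  have hVle : V ≤ volume {x | x ∈ Metric.closedBall y r ∧ u x ≤ A0 * t} := by
    refine measure_mono fun x hx => ⟨hx.1, hx.2.trans ?_⟩
    rw [hψ, bglGauss]
    have h1 : Real.exp (-(α / r ^ 2 * ‖x - y‖ ^ 2)) ≤ 1 :=
      Real.exp_le_one_iff.2 (by rw [neg_nonpos]; positivity)
    have h2 := Real.exp_pos (-(36 * α))
    calc _ ≤ t * A0 * 1 := by gcongr; linarith
      _ = _ := by ring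
  refine le_trans ?_ hVle
  obtain ⟨v, hv0, hvV⟩ : ∃ v : ℝ, 0 ≤ v ∧ V = ENNReal.ofReal v :=
    ⟨V.toReal, ENNReal.toReal_nonneg, (ENNReal.ofReal_toReal hVtop).symm⟩
  rw [hvV]
  apply ENNReal.ofReal_le_ofReal
  have key2 : ENNReal.ofReal ((t / (12 * r)) ^ n * ω) ≤
      ENNReal.ofReal ((3 / lam) ^ n * ((t / (12 * r) + t / r * (12 * α * A0)) ^ n * η +
        η * (t / r) ^ n + (t / r ^ 2 * c2) ^ n * v)) := by
    rw [ENNReal.ofReal_mul (by positivity), ← hωE]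
    refine key.trans ?_
    rw [ENNReal.ofReal_mul (by positivity), ENNReal.ofReal_add (by positivity) (by positivity),
      ENNReal.ofReal_add (by positivity) (by positivity), ENNReal.ofReal_mul (by positivity),
      ENNReal.ofReal_mul (p := (t / r ^ 2 * c2) ^ n) (by positivity), hvV]
    gcongr
  rw [ENNReal.ofReal_le_ofReal_iff (by positivity)] at key2
  have e1 : (t / (12 * r)) ^ n * ω = (t / r) ^ n * B := by
    rw [hB, ← mul_assoc, ← mul_pow]; congr 2; field_simp
  have e2 : (3 / lam) ^ n * ((t / (12 * r) + t / r * (12 * α * A0)) ^ n * η +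
        η * (t / r) ^ n + (t / r ^ 2 * c2) ^ n * v) =
      (t / r) ^ n * ((3 / lam) ^ n * (c1 ^ n + 1) * η + (3 / lam) ^ n * c2 ^ n * (v / r ^ n)) := by
    have e3 : t / (12 * r) + t / r * (12 * α * A0) = t / r * c1 := by rw [hc1]; field_simp
    have e4 : (t / r ^ 2 * c2) ^ n * v = (t / r) ^ n * (c2 ^ n * (v / r ^ n)) := by
      rw [mul_pow, div_pow, div_pow, ← pow_mul, mul_comm 2 n, pow_mul]; field_simp
    rw [e3, e4, mul_pow]; ring
  rw [e1, e2] at key2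
  have key3 := le_of_mul_le_mul_left key2 (by positivity)
  have e5 : (3 / lam) ^ n * (c1 ^ n + 1) * η = B / 2 := by rw [hη]; field_simp
  rw [e5] at key3
  have key4 : B / 2 ≤ (3 / lam) ^ n * c2 ^ n * (v / r ^ n) := by linarith
  rw [hμ, div_mul_eq_mul_div, div_le_iff₀ (by positivity)]
  rw [← mul_div_assoc, le_div_iff₀ (by positivity)] at key4
  linarith

lemma bgl_decay_step {n : ℕ} (hn : 2 ≤ n) {lam Lam M μ η : ℝ} (hM : 1 ≤ M) (hη : 0 < η)
    (G : BglG n lam Lam M μ η) {κ : ℝ} (hκ0 : 0 ≤ κ)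
    (hκ : κ * (5 ^ n * volume.real (Metric.ball (0 : BE n) 1)) ≤ μ)
    {U : Set (BE n)} {b f u : BE n → ℝ} (H : BglSuper n lam Lam U b f u)
    {y z : BE n} {r t s : ℝ} (hr : 0 < r) (ht : 0 < t) (hts : t ≤ s)
    (hU : Metric.closedBall y (4 * r) ⊆ U)
    (hb : (∫⁻ x in Metric.closedBall y (4 * r), ENNReal.ofReal (b x ^ n)) ≤ ENNReal.ofReal η)
    (hf : (∫⁻ x in Metric.closedBall y (4 * r), ENNReal.ofReal (f x ^ n)) ≤
        ENNReal.ofReal (η * (t / r) ^ n))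
    (hz : z ∈ Metric.closedBall y r) (huz : u z ≤ t) :
    volume.real {x | x ∈ Metric.closedBall y r ∧ M * s < u x} ≤
      (1 - κ) * volume.real {x | x ∈ Metric.closedBall y r ∧ s < u x} := by
  have hne : Nonempty (Fin n) := ⟨⟨0, by omega⟩⟩
  have hs : 0 < s := ht.trans_le hts
  set D := Metric.closedBall y r with hD
  have hDU : D ⊆ U := (Metric.closedBall_subset_closedBall (by linarith)).trans hU
  have huD : ContinuousOn u D := H.u2.continuousOn.mono hDU
  have hcl : ∀ (C : Set (BE n)) (q : ℝ), C ⊆ U → IsClosed C → IsClosed {x | x ∈ C ∧ u x ≤ q} :=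
    fun C q hCU hC =>
      (H.u2.continuousOn.mono hCU).preimage_isClosed_of_isClosed hC isClosed_Iic
  set F := {x | x ∈ D ∧ u x ≤ s} with hF
  have hFc : IsCompact F := (isCompact_closedBall y r).of_isClosed_subset
    (hcl D s hDU Metric.isClosed_closedBall) fun x hx => hx.1
  have hFne : F.Nonempty := ⟨z, hz, huz.trans hts⟩
  set E := {x | x ∈ D ∧ s < u x} with hE
  set E' := {x | x ∈ D ∧ M * s < u x} with hE'
  have hmeas : ∀ q, MeasurableSet {x | x ∈ D ∧ q < u x} := by
    intro q
    have : {x | x ∈ D ∧ q < u x} = D \ {x | x ∈ D ∧ u x ≤ q} := by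
      ext x; simp only [Set.mem_sdiff, Set.mem_ofPred_eq]; constructor
      · rintro ⟨h1, h2⟩; exact ⟨h1, fun h => absurd h.2 (not_le.2 h2)⟩
      · rintro ⟨h1, h2⟩; exact ⟨h1, not_le.1 fun h => h2 ⟨h1, h⟩⟩
    rw [this]
    exact Metric.isClosed_closedBall.measurableSet.diff
      (hcl D q hDU Metric.isClosed_closedBall).measurableSet
  have hE'E : E' ⊆ E := fun x hx => ⟨hx.1, lt_of_le_of_lt (by nlinarith) hx.2⟩
  set ρ : BE n → ℝ := fun x => Metric.infDist x F / 4 with hρ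
  set c : BE n → BE n := fun x => x + (ρ x / r) • (y - x) with hc
  have hρ0 : ∀ x ∈ E, 0 < ρ x := by
    intro x hx
    have : x ∉ F := fun h => absurd h.2 (not_le.2 hx.2)
    have := (hFc.isClosed.notMem_iff_infDist_pos hFne).1 this
    simp only [hρ]; linarith
  have hρz : ∀ x ∈ E, ∃ z' ∈ F, dist x z' = 4 * ρ x := by
    intro x _
    obtain ⟨z', h1, h2⟩ := hFc.exists_infDist_eq_dist hFne x
    exact ⟨z', h1, by simp only [hρ]; rw [h2]; ring⟩
  have hρr : ∀ x ∈ E, ρ x ≤ r / 2 := by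
    intro x hx
    obtain ⟨z', h1, h2⟩ := hρz x hx
    have h3 := dist_triangle_right x z' y
    have h4 : dist x y ≤ r := hx.1
    have h5 : dist z' y ≤ r := h1.1
    linarith
  have hcx : ∀ x ∈ E, dist x (c x) ≤ ρ x := by
    intro x hx
    have h0 := hρ0 x hx
    have h4 : dist y x ≤ r := by rw [dist_comm]; exact hx.1
    simp only [hc]
    rw [dist_self_add_right, norm_smul, Real.norm_eq_abs, abs_of_pos (by positivity), ← dist_eq_norm]
    calc ρ x / r * dist y x ≤ ρ x / r * r := by gcongr
      _ = ρ x := by field_simp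
  have hcy : ∀ x ∈ E, dist (c x) y ≤ r - ρ x := by
    intro x hx
    have h0 := hρ0 x hx
    have h1 := hρr x hx
    have h4 : dist x y ≤ r := hx.1
    have e : c x - y = (1 - ρ x / r) • (x - y) := by
      simp only [hc]; module
    have h5 : 0 ≤ 1 - ρ x / r := by
      rw [sub_nonneg, div_le_one hr]; linarith
    rw [dist_eq_norm, e, norm_smul, Real.norm_eq_abs, abs_of_nonneg h5, ← dist_eq_norm]
    calc (1 - ρ x / r) * dist x y ≤ (1 - ρ x / r) * r := by gcongr
      _ = r - ρ x := by field_simp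
  have hball : ∀ x ∈ E, Metric.closedBall (c x) (ρ x) ⊆ E := by
    intro x hx w hw
    rw [Metric.mem_closedBall] at hw
    have h0 := hρ0 x hx
    have h1 := hcy x hx
    have h2 := hcx x hx
    have hwD : w ∈ D := by
      rw [hD, Metric.mem_closedBall]
      linarith [dist_triangle w (c x) y]
    refine ⟨hwD, ?_⟩
    by_contra hlt
    push Not at hlt
    have h3 : Metric.infDist x F ≤ dist x w := Metric.infDist_le_dist_of_mem ⟨hwD, hlt⟩
    have h4 := dist_triangle_right x w (c x)
    have h5 : Metric.infDist x F = 4 * ρ x := by simp only [hρ]; ring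
    linarith
  set A : BE n → Set (BE n) := fun x => {w | w ∈ Metric.closedBall (c x) (ρ x) ∧ u w ≤ M * s} with hA
  have hAvol : ∀ x ∈ E, ENNReal.ofReal (μ * ρ x ^ n) ≤ volume (A x) := by
    intro x hx
    have h0 := hρ0 x hx
    have h1 := hcy x hx
    have h2 := hcx x hx
    have h3 := hρr x hx
    obtain ⟨z', hz', hz'd⟩ := hρz x hx
    have hsub : Metric.closedBall (c x) (6 * ρ x) ⊆ Metric.closedBall y (4 * r) :=
      Metric.closedBall_subset_closedBall' (by linarith)
    refine G U b f u H (c x) z' (ρ x) s h0 hs (hsub.trans hU) ?_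
      ((lintegral_mono_set hsub).trans hb) ((lintegral_mono_set hsub).trans (hf.trans ?_)) hz'.2
    · have := dist_triangle_left z' (c x) x
      linarith
    · apply ENNReal.ofReal_le_ofReal
      gcongr
      linarith
  obtain ⟨v, hvE, hdisj, hcov⟩ := Vitali.exists_disjoint_subfamily_covering_enlargement_closedBall
    E c ρ (r / 2) hρr 5 (by norm_num)
  have hvc : v.Countable := hdisj.countable_of_nonempty_interior fun x hx =>
    ⟨c x, Metric.ball_subset_interior_closedBall (Metric.mem_ball_self (hρ0 x (hvE hx)))⟩
  have hEcov : E ⊆ ⋃ x ∈ v, Metric.closedBall (c x) (5 * ρ x) := by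
    intro x hx
    obtain ⟨x', hx', h⟩ := hcov x hx
    exact Set.mem_biUnion hx' (h (hcx x hx))
  have hAm : ∀ x ∈ E, MeasurableSet (A x) := fun x hx =>
    (hcl _ _ (((hball x hx).trans fun _ h => h.1).trans hDU) Metric.isClosed_closedBall).measurableSet
  have hsubA : (⋃ x ∈ v, A x) ⊆ E \ E' := by
    intro w hw
    simp only [Set.mem_iUnion] at hw
    obtain ⟨x, hx, hw1, hw2⟩ := hw
    exact ⟨hball x (hvE hx) hw1, fun h => absurd h.2 (not_lt.2 hw2)⟩
  have hfin : ∀ C : Set (BE n), C ⊆ E → volume C ≠ ⊤ := fun C hC =>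
    ((measure_mono (hC.trans fun x hx => hx.1)).trans_lt measure_closedBall_lt_top).ne
  have hmain : ENNReal.ofReal κ * volume E ≤ volume (E \ E') := by
    have : Countable v := hvc
    calc ENNReal.ofReal κ * volume E
        ≤ ENNReal.ofReal κ * ∑' x : v, volume (Metric.closedBall (c x) (5 * ρ x)) := by
          gcongr
          exact (measure_mono hEcov).trans (measure_biUnion_le _ hvc _)
      _ = ∑' x : v, ENNReal.ofReal κ * volume (Metric.closedBall (c x) (5 * ρ x)) :=
          ENNReal.tsum_mul_left.symm
      _ ≤ ∑' x : v, volume (A x) := by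
          refine ENNReal.tsum_le_tsum fun x => ?_
          have h0 := hρ0 x (hvE x.2)
          refine le_trans ?_ (hAvol x (hvE x.2))
          rw [Measure.addHaar_closedBall volume _ (by positivity)]
          simp only [finrank_euclideanSpace, Fintype.card_fin]
          rw [← ofReal_measureReal (measure_ball_lt_top (x := (0 : BE n)) (r := 1)).ne,
            ← ENNReal.ofReal_mul (by positivity), ← ENNReal.ofReal_mul hκ0]
          apply ENNReal.ofReal_le_ofReal
          calc _ = κ * (5 ^ n * volume.real (Metric.ball (0 : BE n) 1)) * ρ x ^ n := by
                rw [mul_pow]; ring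
            _ ≤ _ := by gcongr
      _ = volume (⋃ x ∈ v, A x) := by
          rw [measure_biUnion hvc (hdisj.mono fun x w hw => hw.1) fun x hx => hAm x (hvE hx)]
      _ ≤ _ := measure_mono hsubA
  have h1 : κ * volume.real E ≤ volume.real (E \ E') := by
    have := ENNReal.toReal_mono (hfin _ Set.sdiff_subset) hmain
    rwa [ENNReal.toReal_mul, ENNReal.toReal_ofReal hκ0] at this
  have h2 : volume.real (E \ E') = volume.real E - volume.real E' :=
    measureReal_sdiff hE'E (hmeas _) (hfin E subset_rfl)
  linarith

lemma bgl_decay {n : ℕ} (hn : 2 ≤ n) {lam Lam M μ η : ℝ} (hM : 1 ≤ M) (hμ : 0 < μ) (hη : 0 < η)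
    (G : BglG n lam Lam M μ η) :
    ∃ θ : ℝ, 0 < θ ∧ θ < 1 ∧ ∀ (U : Set (BE n)) (b f u : BE n → ℝ),
      BglSuper n lam Lam U b f u → ∀ (y z : BE n) (r t : ℝ), 0 < r → 0 < t →
      Metric.closedBall y (4 * r) ⊆ U →
      (∫⁻ x in Metric.closedBall y (4 * r), ENNReal.ofReal (b x ^ n)) ≤ ENNReal.ofReal η →
      (∫⁻ x in Metric.closedBall y (4 * r), ENNReal.ofReal (f x ^ n)) ≤
        ENNReal.ofReal (η * (t / r) ^ n) →
      z ∈ Metric.closedBall y r → u z ≤ t → ∀ k : ℕ,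
      volume.real {x | x ∈ Metric.closedBall y r ∧ M ^ k * t < u x} ≤
        θ ^ k * volume.real (Metric.closedBall y r) := by
  have hne : Nonempty (Fin n) := ⟨⟨0, by omega⟩⟩
  set ω : ℝ := volume.real (Metric.ball (0 : BE n) 1) with hω
  have hω0 : 0 < ω := ENNReal.toReal_pos (Metric.measure_ball_pos _ _ one_pos).ne'
    measure_ball_lt_top.ne
  set κ : ℝ := min (μ / (5 ^ n * ω)) (1 / 2) with hκ
  have hκ0 : 0 < κ := lt_min (by positivity) (by norm_num)
  have hκ1 : κ ≤ 1 / 2 := min_le_right _ _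
  have hκ2 : κ * (5 ^ n * ω) ≤ μ := by
    rw [← le_div_iff₀ (by positivity)]; exact min_le_left _ _
  refine ⟨1 - κ, by linarith, by linarith, ?_⟩
  intro U b f u H y z r t hr ht hU hb hf hz huz k
  induction k with
  | zero =>
    simp only [pow_zero, one_mul]
    exact measureReal_mono (fun x hx => hx.1) measure_closedBall_lt_top.ne
  | succ k ih =>
    have h1 : t ≤ M ^ k * t := by
      have := one_le_pow₀ hM (n := k)
      nlinarith
    have h2 := bgl_decay_step hn hM hη G hκ0.le hκ2 H hr ht h1 hU hb hf hz huz
    rw [← mul_assoc, ← pow_succ'] at h2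
    refine h2.trans ?_
    rw [pow_succ', mul_assoc]
    exact mul_le_mul_of_nonneg_left ih (by linarith)

lemma bgl_holder {n : ℕ} (hn : 2 ≤ n) {q : ℝ} (hq : (n : ℝ) ≤ q) {S U : Set (BE n)}
    (hSU : S ⊆ U) (hS : MeasurableSet S) {b : BE n → ℝ} (hb : ContinuousOn b U)
    (hb0 : ∀ x ∈ U, 0 ≤ b x) {K V : ℝ} (hK : 0 ≤ K) (hV : 0 ≤ V)
    (hbK : LpNormE n q b U ≤ ENNReal.ofReal K) (hSV : volume S ≤ ENNReal.ofReal V) :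
    (∫⁻ x in S, ENNReal.ofReal (b x ^ n)) ≤
      ENNReal.ofReal ((K * V ^ (1 / (n : ℝ) - 1 / q)) ^ n) := by
  have hn0 : (0 : ℝ) < n := by exact_mod_cast (by omega : 0 < n)
  have hq0 : 0 < q := hn0.trans_le hq
  have hσ : 0 ≤ 1 / (n : ℝ) - 1 / q := sub_nonneg.2 (one_div_le_one_div_of_le hn0 hq)
  have hm : AEStronglyMeasurable b (volume.restrict S) :=
    (hb.mono hSU).aestronglyMeasurable hS
  have h1 := eLpNorm'_le_eLpNorm'_mul_rpow_measure_univ (p := (n : ℝ)) hn0 hq hm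
  have h2 : eLpNorm' b q (volume.restrict S) ≤ ENNReal.ofReal K := by
    refine le_trans ?_ hbK
    unfold eLpNorm' LpNormE
    apply ENNReal.rpow_le_rpow _ (by positivity)
    refine le_trans (le_of_eq ?_) (lintegral_mono_set hSU)
    refine lintegral_congr fun x => ?_
    rw [← ENNReal.ofReal_rpow_of_nonneg (abs_nonneg _) hq0.le, ← Real.norm_eq_abs,
      ofReal_norm_eq_enorm]
  rw [Measure.restrict_apply_univ] at h1
  have h3 : eLpNorm' b n (volume.restrict S) ≤ ENNReal.ofReal (K * V ^ (1 / (n : ℝ) - 1 / q)) := by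
    refine h1.trans ?_
    rw [ENNReal.ofReal_mul hK, ← ENNReal.ofReal_rpow_of_nonneg hV hσ]
    gcongr
  have h4 : (∫⁻ x in S, ENNReal.ofReal (b x ^ n)) = (eLpNorm' b n (volume.restrict S)) ^ n := by
    unfold eLpNorm'
    rw [← ENNReal.rpow_natCast, ← ENNReal.rpow_mul, one_div_mul_cancel hn0.ne', ENNReal.rpow_one]
    refine setLIntegral_congr_fun hS fun x hx => ?_
    rw [ENNReal.rpow_natCast, ← ofReal_norm_eq_enorm, Real.norm_of_nonneg (hb0 x (hSU hx)),
      ENNReal.ofReal_pow (hb0 x (hSU hx))]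
  rw [h4, ENNReal.ofReal_pow (by positivity)]
  gcongr

lemma bgl_small {n : ℕ} (hn : 2 ≤ n) {σ : ℝ} (hσ : 0 < σ) (K W : ℝ) {η : ℝ} (hη : 0 < η) :
    ∀ᶠ r in nhdsWithin (0:ℝ) (Set.Ioi 0), (K * (W * r ^ n) ^ σ) ^ n ≤ η := by
  have h1 : Continuous fun r : ℝ => (K * (W * r ^ n) ^ σ) ^ n :=
    (continuous_const.mul ((continuous_const.mul (continuous_pow n)).rpow_const
      fun _ => Or.inr hσ.le)).pow n
  have h2 := h1.tendsto 0
  have e : (K * (W * (0:ℝ) ^ n) ^ σ) ^ n = 0 := by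
    rw [zero_pow (by omega), mul_zero, Real.zero_rpow hσ.ne', mul_zero, zero_pow (by omega)]
  rw [e] at h2
  exact ((h2.mono_left nhdsWithin_le_nhds).eventually (gt_mem_nhds hη)).mono fun r h => h.le

lemma bgl_interior (n : ℕ) (hn : 2 ≤ n) (lam Lam : ℝ) (hlam : 0 < lam) (hLam : lam ≤ Lam)
    (q : ℝ) (hq : (n : ℝ) < q) (K : ℝ) (hK : 0 < K) (U Z : Set (BE n)) (hZ : IsCompact Z)
    (hZc : Convex ℝ Z) (R0 : ℝ) (hR0 : 0 < R0) (hZU : ∀ x ∈ Z, Metric.closedBall x R0 ⊆ U)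
    (m ν : ℝ) (hm : 0 < m) (hν : 0 < ν) :
    ∃ c a : ℝ, 0 < c ∧ 0 < a ∧ ∀ b f u : BE n → ℝ, BglSuper n lam Lam U b f u →
      LpNormE n q b U ≤ ENNReal.ofReal K →
      (∫⁻ x in U, ENNReal.ofReal (f x ^ n)) ≤ ENNReal.ofReal a →
      ENNReal.ofReal ν ≤ volume {x | x ∈ Z ∧ m < u x} → ∀ x ∈ Z, c < u x := by
  have hne : Nonempty (Fin n) := ⟨⟨0, by omega⟩⟩
  have hn0 : (0 : ℝ) < n := by exact_mod_cast (by omega : 0 < n)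
  obtain ⟨M, μ, η, hM, hμ, hη, G⟩ := bgl_growth n hn lam Lam hlam hLam
  obtain ⟨θ, hθ0, hθ1, hdec⟩ := bgl_decay hn hM hμ hη G
  have hM0 : 0 < M := by linarith
  set ω : ℝ := volume.real (Metric.ball (0 : BE n) 1) with hω
  have hωE : volume (Metric.ball (0 : BE n) 1) = ENNReal.ofReal ω := by
    rw [hω, ofReal_measureReal measure_ball_lt_top.ne]
  have hω0 : 0 ≤ ω := measureReal_nonneg
  have hσ : 0 < 1 / (n : ℝ) - 1 / q := sub_pos.2 (one_div_lt_one_div_of_lt hn0 hq)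
  obtain ⟨r, hrη, hrR, hr⟩ : ∃ r : ℝ, (K * ((ω * 6 ^ n) * r ^ n) ^ (1 / (n : ℝ) - 1 / q)) ^ n ≤ η ∧
      r < min (R0 / 6) 1 ∧ 0 < r := by
    have h1 := bgl_small hn hσ K (ω * 6 ^ n) hη
    have h2 : ∀ᶠ r in nhdsWithin (0:ℝ) (Set.Ioi 0), r < min (R0 / 6) 1 :=
      nhdsWithin_le_nhds (Iio_mem_nhds (lt_min (by positivity) one_pos))
    have h3 : ∀ᶠ r in nhdsWithin (0:ℝ) (Set.Ioi 0), 0 < r := eventually_mem_nhdsWithin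
    exact (h1.and (h2.and h3)).exists
  have hr1 : r ≤ 1 := hrR.le.trans (min_le_right _ _)
  have hr6 : 6 * r ≤ R0 := by
    have := hrR.le.trans (min_le_left _ _)
    linarith
  obtain ⟨T, hTZ, hTf, hTcov⟩ := hZ.finite_cover_balls hr
  set N : ℕ := hTf.toFinset.card with hN
  set ν' : ℝ := ν / (N + 1) with hν'
  have hν'0 : 0 < ν' := by positivity
  obtain ⟨k, hk⟩ : ∃ k : ℕ, θ ^ k * (ω * r ^ n) < ν' := by
    have h1 : Filter.Tendsto (fun k : ℕ => θ ^ k * (ω * r ^ n)) Filter.atTop (nhds (0 * (ω * r ^ n))) :=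
      (tendsto_pow_atTop_nhds_zero_of_lt_one hθ0.le hθ1).mul_const _
    rw [zero_mul] at h1
    exact (h1.eventually (gt_mem_nhds hν'0)).exists
  obtain ⟨N2, hN2⟩ : ∃ N2 : ℕ, Metric.diam Z ≤ N2 * (4 * r) := by
    obtain ⟨N2, h⟩ := exists_nat_ge (Metric.diam Z / (4 * r))
    exact ⟨N2, by rwa [div_le_iff₀ (by positivity)] at h⟩
  set t0 : ℝ := m / M ^ k with ht0
  have ht00 : 0 < t0 := by positivity
  set c : ℝ := t0 / M ^ N2 with hc
  have hc0 : 0 < c := by positivity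
  have hct : ∀ i ≤ N2, c ≤ t0 / M ^ i := fun i hi => by
    rw [hc]; gcongr
  refine ⟨c, η * c ^ n, hc0, by positivity, ?_⟩
  intro b f u H hbK hfa hvol
  have hbint : ∀ y ∈ Z, (∫⁻ x in Metric.closedBall y (6 * r), ENNReal.ofReal (b x ^ n)) ≤
      ENNReal.ofReal η := by
    intro y hy
    refine (bgl_holder hn hq.le ((Metric.closedBall_subset_closedBall hr6).trans (hZU y hy))
      Metric.isClosed_closedBall.measurableSet H.bcont H.b0 hK.le
      (by positivity : 0 ≤ (ω * 6 ^ n) * r ^ n) hbK (le_of_eq ?_)).trans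
      (ENNReal.ofReal_le_ofReal hrη)
    rw [Measure.addHaar_closedBall volume _ (by positivity), hωE,
      ← ENNReal.ofReal_mul (by positivity), finrank_euclideanSpace, Fintype.card_fin, mul_pow]
    congr 1; ring
  have hsub6 : ∀ y ∈ Z, Metric.closedBall y (6 * r) ⊆ U := fun y hy =>
    (Metric.closedBall_subset_closedBall hr6).trans (hZU y hy)
  have hfint : ∀ t, c ≤ t → (∫⁻ x in U, ENNReal.ofReal (f x ^ n)) ≤
      ENNReal.ofReal (η * (t / r) ^ n) := by
    intro t ht
    refine hfa.trans (ENNReal.ofReal_le_ofReal ?_)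
    gcongr
    rw [le_div_iff₀ hr]
    nlinarith
  obtain ⟨y, hyT, hy⟩ : ∃ y ∈ T, ENNReal.ofReal ν' ≤
      volume {x | x ∈ Metric.closedBall y r ∧ m < u x} := by
    by_contra hcon
    push Not at hcon
    have h1 : {x | x ∈ Z ∧ m < u x} ⊆ ⋃ y ∈ hTf.toFinset,
        {x | x ∈ Metric.closedBall y r ∧ m < u x} := by
      intro x hx
      obtain ⟨y, hyT, hxy⟩ := Set.mem_iUnion₂.1 (hTcov hx.1)
      exact Set.mem_iUnion₂.2 ⟨y, by simpa using hyT, Metric.ball_subset_closedBall hxy, hx.2⟩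
    have h2 : ENNReal.ofReal ν ≤ ENNReal.ofReal (N * ν') :=
      calc ENNReal.ofReal ν ≤ _ := hvol
        _ ≤ _ := measure_mono h1
        _ ≤ ∑ y ∈ hTf.toFinset, volume {x | x ∈ Metric.closedBall y r ∧ m < u x} :=
          measure_biUnion_finset_le _ _
        _ ≤ ∑ _y ∈ hTf.toFinset, ENNReal.ofReal ν' :=
          Finset.sum_le_sum fun y hy => (hcon y (by simpa using hy)).le
        _ = _ := by
          rw [Finset.sum_const, nsmul_eq_mul, ENNReal.ofReal_mul (by positivity),
            ENNReal.ofReal_natCast]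
    rw [ENNReal.ofReal_le_ofReal_iff (by positivity)] at h2
    have h3 : (N + 1) * ν' = ν := by rw [hν']; field_simp
    linarith
  have hyZ : y ∈ Z := hTZ hyT
  have hstart : ∀ x ∈ Metric.closedBall y r, t0 < u x := by
    intro x hx
    by_contra hlt
    push Not at hlt
    have hs4 : Metric.closedBall y (4 * r) ⊆ Metric.closedBall y (6 * r) :=
      Metric.closedBall_subset_closedBall (by linarith)
    have h1 := hdec U b f u H y x r t0 hr ht00 (hs4.trans (hsub6 y hyZ))
      ((lintegral_mono_set hs4).trans (hbint y hyZ))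
      ((lintegral_mono_set (hs4.trans (hsub6 y hyZ))).trans
        (hfint t0 (by simpa using hct 0 (Nat.zero_le _)))) hx hlt k
    have e : M ^ k * t0 = m := by rw [ht0]; field_simp
    rw [e] at h1
    have h2 : volume.real (Metric.closedBall y r) = ω * r ^ n := by
      rw [measureReal_def, Measure.addHaar_closedBall volume _ hr.le, hωE,
        ← ENNReal.ofReal_mul (by positivity), finrank_euclideanSpace, Fintype.card_fin,
        ENNReal.toReal_ofReal (by positivity)]
      ring
    rw [h2] at h1
    have h3 : ν' ≤ volume.real {x | x ∈ Metric.closedBall y r ∧ m < u x} := by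
      have hfin : volume {x | x ∈ Metric.closedBall y r ∧ m < u x} ≠ ⊤ :=
        ((measure_mono fun x hx => hx.1).trans_lt
          (measure_closedBall_lt_top (x := y) (r := r))).ne
      have := ENNReal.toReal_mono hfin hy
      rwa [ENNReal.toReal_ofReal hν'0.le] at this
    linarith
  have hchain : ∀ i ≤ N2, ∀ y' ∈ Z, dist y' y ≤ i * (4 * r) →
      ∀ x ∈ Metric.closedBall y' r, t0 / M ^ i < u x := by
    intro i
    induction i with
    | zero =>
      intro _ y' _ hd x hx
      have : y' = y := by
        rw [← dist_le_zero]; simpa using hd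
      subst this
      simpa using hstart x hx
    | succ i ih =>
      intro hi y' hy' hd x hx
      set s : ℝ := i / (i + 1) with hs
      have hi1 : (0:ℝ) < i + 1 := by positivity
      have hs0 : 0 ≤ s := by positivity
      have hs1 : 1 - s = 1 / (i + 1) := by rw [hs]; field_simp; ring
      set y'' : BE n := s • y' + (1 - s) • y with hy''
      have hy''Z : y'' ∈ Z := hZc hy' hyZ hs0 (by rw [hs1]; positivity) (by ring)
      push_cast at hd
      have hd1 : dist y'' y ≤ i * (4 * r) := by
        have e : y'' - y = s • (y' - y) := by rw [hy'']; module
        rw [dist_eq_norm, e, norm_smul, Real.norm_of_nonneg hs0, ← dist_eq_norm]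
        calc s * dist y' y ≤ s * ((i + 1) * (4 * r)) := by gcongr
          _ = _ := by rw [hs]; field_simp
      have hd2 : dist y' y'' ≤ 4 * r := by
        have e : y' - y'' = (1 - s) • (y' - y) := by rw [hy'']; module
        rw [dist_eq_norm, e, norm_smul, Real.norm_of_nonneg (by rw [hs1]; positivity),
          ← dist_eq_norm, hs1]
        calc 1 / ((i:ℝ) + 1) * dist y' y ≤ 1 / ((i:ℝ) + 1) * ((i + 1) * (4 * r)) := by gcongr
          _ = _ := by field_simp
      have hprev := ih (by omega) y'' hy''Z hd1
      by_contra hlt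
      push Not at hlt
      rw [Metric.mem_closedBall] at hx
      have h1 := G U b f u H y'' x r (t0 / M ^ (i + 1)) hr (by positivity) (hsub6 _ hy''Z)
        (by linarith [dist_triangle x y' y'']) (hbint _ hy''Z)
        ((lintegral_mono_set (hsub6 _ hy''Z)).trans (hfint _ (hct _ hi))) hlt
      have h2 : {w | w ∈ Metric.closedBall y'' r ∧ u w ≤ M * (t0 / M ^ (i + 1))} = ∅ := by
        ext w
        simp only [Set.mem_ofPred_eq, Set.mem_empty_iff_false, iff_false, not_and, not_le]
        intro hw
        have e : M * (t0 / M ^ (i + 1)) = t0 / M ^ i := by rw [pow_succ]; field_simp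
        rw [e]
        exact hprev w hw
      rw [h2, measure_empty, nonpos_iff_eq_zero, ENNReal.ofReal_eq_zero] at h1
      have : 0 < μ * r ^ n := by positivity
      linarith
  intro x hx
  exact hchain N2 le_rfl x hx ((Metric.dist_le_diam_of_mem hZ.isBounded hx hyZ).trans hN2) x
    (Metric.mem_closedBall_self hr.le)

/-- separable quadratic -/
noncomputable def bglQ (n : ℕ) (N : Fin n) (α z : Fin n → ℝ) (β γ : ℝ) (x : BE n) : ℝ :=
  (∑ i, α i * (x i - z i) ^ 2) + β * x N + γ

lemma bgl_Q_deriv {n : ℕ} (N : Fin n) (α z : Fin n → ℝ) (β γ : ℝ) (x : BE n) :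
    HasFDerivAt (bglQ n N α z β γ)
      ((∑ i, (2 * α i * (x i - z i)) • (EuclideanSpace.proj i : BE n →L[ℝ] ℝ)) +
        β • (EuclideanSpace.proj N : BE n →L[ℝ] ℝ)) x := by
  have h1 : ∀ i : Fin n, HasFDerivAt (fun y : BE n => α i * (y i - z i) ^ 2)
      ((2 * α i * (x i - z i)) • (EuclideanSpace.proj i : BE n →L[ℝ] ℝ)) x := by
    intro i
    have h : HasFDerivAt (fun y : BE n => y i - z i) (EuclideanSpace.proj i : BE n →L[ℝ] ℝ) x :=
      (EuclideanSpace.proj i : BE n →L[ℝ] ℝ).hasFDerivAt.sub_const _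
    have h2 := (h.pow 2).const_mul (α i)
    refine h2.congr_fderiv ?_
    ext v
    simp
    ring
  have h2 : HasFDerivAt (fun y : BE n => β * y N) (β • (EuclideanSpace.proj N : BE n →L[ℝ] ℝ)) x :=
    (EuclideanSpace.proj N : BE n →L[ℝ] ℝ).hasFDerivAt.const_mul β
  exact ((HasFDerivAt.fun_sum fun i _ => h1 i).add h2).add_const γ

lemma bgl_Q_contDiff {n : ℕ} (N : Fin n) (α z : Fin n → ℝ) (β γ : ℝ) :
    ContDiff ℝ 2 (bglQ n N α z β γ) := by
  unfold bglQ
  have h : ∀ i : Fin n, ContDiff ℝ 2 (fun y : BE n => y i) := fun i =>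
    (EuclideanSpace.proj i : BE n →L[ℝ] ℝ).contDiff
  exact ((ContDiff.sum fun i _ => contDiff_const.mul (((h i).sub contDiff_const).pow 2)).add
    (contDiff_const.mul (h N))).add contDiff_const

lemma bgl_Q_hess {n : ℕ} (N : Fin n) (α z : Fin n → ℝ) (β γ : ℝ) (x : BE n) (i j : Fin n) :
    hess n (bglQ n N α z β γ) x i j = if i = j then 2 * α i else 0 := by
  unfold hess
  have e1 : (fun y => fderiv ℝ (bglQ n N α z β γ) y (EuclideanSpace.single j (1:ℝ))) =
      fun y => (2 * α j) * (y j - z j) + (if N = j then β else 0) := by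
    ext y
    rw [(bgl_Q_deriv N α z β γ y).fderiv]
    simp
  rw [e1]
  have h1 : HasFDerivAt (fun y : BE n => y j - z j) (EuclideanSpace.proj j : BE n →L[ℝ] ℝ) x :=
    (EuclideanSpace.proj j : BE n →L[ℝ] ℝ).hasFDerivAt.sub_const _
  have h2 : HasFDerivAt (fun y : BE n => (2 * α j) * (y j - z j) + (if N = j then β else 0)) _ x :=
    (h1.const_mul (2 * α j)).add_const _
  rw [h2.fderiv]
  by_cases hij : i = j
  · subst hij
    simp
  · have hij' : ¬ j = i := fun h => hij h.symm
    simp [hij, hij']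

lemma bgl_Q_trace {n : ℕ} (N : Fin n) (α z : Fin n → ℝ) (β γ : ℝ) (x : BE n)
    (A : Matrix (Fin n) (Fin n) ℝ) :
    (A * hess n (bglQ n N α z β γ) x).trace = 2 * ∑ i, A i i * α i := by
  simp only [Matrix.trace, Matrix.diag, Matrix.mul_apply, bgl_Q_hess]
  rw [Finset.mul_sum]
  refine Finset.sum_congr rfl fun i _ => ?_
  simp
  ring

lemma bgl_proj_norm {n : ℕ} (i : Fin n) : ‖(EuclideanSpace.proj i : BE n →L[ℝ] ℝ)‖ ≤ 1 := by
  refine ContinuousLinearMap.opNorm_le_bound _ zero_le_one fun x => ?_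
  rw [one_mul]
  exact PiLp.norm_apply_le x i

lemma bgl_Q_grad {n : ℕ} (N : Fin n) (α z : Fin n → ℝ) (β γ : ℝ) (x : BE n) {P Q : ℝ}
    (hP : ∀ i, |2 * α i * (x i - z i)| ≤ P) (hQ : |β| ≤ Q) :
    ‖fderiv ℝ (bglQ n N α z β γ) x‖ ≤ n * P + Q := by
  rw [(bgl_Q_deriv N α z β γ x).fderiv]
  refine (norm_add_le _ _).trans (add_le_add ?_ ?_)
  · refine (norm_sum_le _ _).trans ?_
    have : ∑ i : Fin n, ‖(2 * α i * (x i - z i)) • (EuclideanSpace.proj i : BE n →L[ℝ] ℝ)‖ ≤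
        ∑ _i : Fin n, P := by
      refine Finset.sum_le_sum fun i _ => ?_
      rw [norm_smul, Real.norm_eq_abs]
      exact (mul_le_of_le_one_right (abs_nonneg _) (bgl_proj_norm i)).trans (hP i)
    simpa using this
  · rw [norm_smul, Real.norm_eq_abs]
    exact (mul_le_of_le_one_right (abs_nonneg _) (bgl_proj_norm N)).trans hQ

lemma bgl_dist_le {n : ℕ} (x y : BE n) {r : ℝ} (h : ∀ i, |x i - y i| ≤ r) : dist x y ≤ n * r := by
  rw [EuclideanSpace.dist_eq]
  have h1 : ∑ i, dist (x i) (y i) ^ 2 ≤ (∑ i, dist (x i) (y i)) ^ 2 :=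
    Finset.sum_sq_le_sq_sum_of_nonneg fun i _ => dist_nonneg
  refine (Real.sqrt_le_sqrt h1).trans ?_
  rw [Real.sqrt_sq (Finset.sum_nonneg fun i _ => dist_nonneg)]
  have : ∑ i, dist (x i) (y i) ≤ ∑ _i : Fin n, r := Finset.sum_le_sum fun i _ => by
    rw [Real.dist_eq]; exact h i
  simpa using this

lemma bgl_box_closed {n : ℕ} (l h : Fin n → ℝ) : IsClosed {x : BE n | ∀ i, l i ≤ x i ∧ x i ≤ h i} := by
  have e : {x : BE n | ∀ i, l i ≤ x i ∧ x i ≤ h i} = ⋂ i, {x : BE n | l i ≤ x i ∧ x i ≤ h i} := by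
    ext x; simp
  rw [e]
  refine isClosed_iInter fun i => ?_
  have hc : Continuous fun x : BE n => x i := (EuclideanSpace.proj i : BE n →L[ℝ] ℝ).continuous
  exact (isClosed_le continuous_const hc).inter (isClosed_le hc continuous_const)

lemma bgl_box_compact {n : ℕ} (l h : Fin n → ℝ) : IsCompact {x : BE n | ∀ i, l i ≤ x i ∧ x i ≤ h i} := by
  refine Metric.isCompact_of_isClosed_isBounded (bgl_box_closed l h) ?_
  rw [Metric.isBounded_iff]
  refine ⟨n * (∑ i, |h i - l i|), fun x hx y hy => bgl_dist_le x y fun i => ?_⟩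
  have h1 : |x i - y i| ≤ |h i - l i| := by
    have := hx i; have := hy i
    rw [abs_le]
    have := le_abs_self (h i - l i)
    constructor <;> linarith
  exact h1.trans (Finset.single_le_sum (f := fun i => |h i - l i|) (fun i _ => abs_nonneg _) (Finset.mem_univ i))

lemma bgl_box_open {n : ℕ} (l h : Fin n → ℝ) : IsOpen {x : BE n | ∀ i, l i < x i ∧ x i < h i} := by
  have e : {x : BE n | ∀ i, l i < x i ∧ x i < h i} = ⋂ i, {x : BE n | l i < x i ∧ x i < h i} := by
    ext x; simp
  rw [e]
  refine isOpen_iInter_of_finite fun i => ?_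
  have hc : Continuous fun x : BE n => x i := (EuclideanSpace.proj i : BE n →L[ℝ] ℝ).continuous
  exact (isOpen_lt continuous_const hc).inter (isOpen_lt hc continuous_const)

lemma bgl_box_bdry {n : ℕ} (l h : Fin n → ℝ) {x : BE n} (hx : ∀ i, l i ≤ x i ∧ x i ≤ h i)
    (hxi : x ∉ interior {x : BE n | ∀ i, l i ≤ x i ∧ x i ≤ h i}) : ∃ i, x i = l i ∨ x i = h i := by
  by_contra hc
  push Not at hc
  refine hxi (interior_maximal (s := {x : BE n | ∀ i, l i ≤ x i ∧ x i ≤ h i}) (t := {x : BE n | ∀ i, l i < x i ∧ x i < h i})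
    (fun y hy i => ⟨(hy i).1.le, (hy i).2.le⟩) (bgl_box_open l h) fun i => ?_)
  exact ⟨lt_of_le_of_ne (hx i).1 (hc i).1.symm, lt_of_le_of_ne (hx i).2 (hc i).2⟩

/-- the boundary box -/
def bglC (n : ℕ) (N : Fin n) (xs : BE n) (r : ℝ) : Set (BE n) :=
  {x | (∀ i, i ≠ N → |x i - xs i| ≤ r) ∧ 0 < x N ∧ x N ≤ r}

set_option maxHeartbeats 1000000 in
lemma bgl_bstep (n : ℕ) (hn : 2 ≤ n) (lam Lam : ℝ) (hlam : 0 < lam) (hLam : lam ≤ Lam) :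
    ∃ B c : ℝ, 1 ≤ B ∧ 0 < c ∧ ∀ (U : Set (BE n)) (b f u : BE n → ℝ),
      BglSuper n lam Lam U b f u → ∀ (N : Fin n) (xs : BE n) (r k ε ε1 : ℝ), 0 < r → 0 < k →
      0 < ε → ε ≤ 1 → 0 < ε1 → ε1 ≤ 1 → bglC n N xs r ⊆ U →
      (∀ x ∈ bglC n N xs r, k * (x N - ε * r) ≤ u x) →
      (∫⁻ x in bglC n N xs r, ENNReal.ofReal (b x ^ n)) ≤ ENNReal.ofReal (c * ε1 ^ n) →
      (∫⁻ x in bglC n N xs r, ENNReal.ofReal (f x ^ n)) ≤ ENNReal.ofReal (c * (k * ε1) ^ n) →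
      ∀ x ∈ bglC n N xs (r / 2), k * ((1 - B * ε) * x N - ε1 * r) ≤ u x := by
  have hLam0 : 0 < Lam := hlam.trans_le hLam
  have hn0 : (0:ℝ) < n := by exact_mod_cast (by omega : 0 < n)
  have hn1 : (1:ℝ) ≤ n := by exact_mod_cast (by omega : 1 ≤ n)
  have hne : Nonempty (Fin n) := ⟨⟨0, by omega⟩⟩
  set ω : ℝ := volume.real (Metric.ball (0 : BE n) 1) with hω
  have hωE : volume (Metric.ball (0 : BE n) 1) = ENNReal.ofReal ω := by
    rw [hω, ofReal_measureReal measure_ball_lt_top.ne]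
  have hω0 : 0 < ω := by
    rw [← ENNReal.ofReal_pos, ← hωE]
    exact Metric.measure_ball_pos _ _ one_pos
  set B : ℝ := 4 * n * Lam / lam with hB
  have hBl : B * lam = 4 * n * Lam := by rw [hB]; field_simp
  have hB1 : 1 ≤ B := by
    rw [hB, one_le_div hlam]
    nlinarith
  have hB0 : 0 < B := by linarith
  set C1 : ℝ := n * (4 + 2 * B) + (1 + 2 * B) with hC1
  have hC10 : 0 < C1 := by positivity
  set c : ℝ := ω / (2 * n ^ n * (3 / lam) ^ n * ((1 + C1) ^ n + 1)) with hc
  have hc0 : 0 < c := by positivity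
  refine ⟨2 * B, c, by linarith, hc0, ?_⟩
  intro U b f u H N xs r k ε ε1 hr hk hε hε' hε1 hε1' hCU hu hb hf x0 hx0
  by_contra hcon
  push Not at hcon
  set t := x0 N with ht
  obtain ⟨hx0i, ht0, htr⟩ := hx0
  obtain ⟨s, hs0, hst, hsu⟩ : ∃ s : ℝ, 0 < s ∧ s < t ∧
      u x0 ≤ k * ((1 - 2 * B * ε) * t - s - ε1 * r) := by
    set gap := k * ((1 - 2 * B * ε) * t - ε1 * r) - u x0 with hgap
    have hg : 0 < gap := by rw [hgap]; linarith
    refine ⟨min (t / 2) (gap / k), lt_min (by linarith) (by positivity),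
      (min_le_left _ _).trans_lt (by linarith), ?_⟩
    have h1 : k * min (t / 2) (gap / k) ≤ gap := by
      calc k * min (t / 2) (gap / k) ≤ k * (gap / k) := by gcongr; exact min_le_right _ _
        _ = gap := by field_simp
    linarith
  set l : Fin n → ℝ := fun i => if i = N then s else x0 i - r / 2 with hl
  set h : Fin n → ℝ := fun i => if i = N then r else x0 i + r / 2 with hh
  set κ : ℝ := k * ε / r with hκ
  have hκ0 : 0 < κ := by positivity
  have hκr : κ * r = k * ε := by rw [hκ]; field_simp
  set α : Fin n → ℝ := fun i => if i = N then B * κ else -(4 * κ) with hα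
  set z : Fin n → ℝ := fun i => if i = N then 0 else x0 i with hz
  set Kb : Set (BE n) := {x | ∀ i, l i ≤ x i ∧ x i ≤ h i} with hKb
  have memK : ∀ x ∈ Kb, (∀ i, i ≠ N → |x i - x0 i| ≤ r / 2) ∧ s ≤ x N ∧ x N ≤ r := by
    intro x hx
    refine ⟨fun i hi => ?_, ?_⟩
    · have := hx i
      simp only [hl, hh, hi, if_false] at this
      rw [abs_le]; constructor <;> linarith
    · have := hx N
      simpa [hl, hh] using this
  have hKC : Kb ⊆ bglC n N xs r := by
    intro x hx
    obtain ⟨h1, h2, h3⟩ := memK x hx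
    refine ⟨fun i hi => ?_, by linarith, h3⟩
    calc |x i - xs i| = |(x i - x0 i) + (x0 i - xs i)| := by ring_nf
      _ ≤ |x i - x0 i| + |x0 i - xs i| := abs_add_le _ _
      _ ≤ r := by linarith [h1 i hi, hx0i i hi]
  set ψ := bglQ n N α z (k - 2 * B * (k * ε)) (-(k * s)) with hψ
  have hψv : ∀ x : BE n, ψ x = k * (x N - s) - κ * (4 * (∑ i ∈ Finset.univ.erase N, (x i - x0 i) ^ 2) +
      B * (2 * r * x N - x N ^ 2)) := by
    intro x
    rw [hψ]
    unfold bglQ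
    rw [← Finset.add_sum_erase _ _ (Finset.mem_univ N)]
    have : ∑ i ∈ Finset.univ.erase N, α i * (x i - z i) ^ 2 =
        -(4 * κ) * ∑ i ∈ Finset.univ.erase N, (x i - x0 i) ^ 2 := by
      rw [Finset.mul_sum]
      refine Finset.sum_congr rfl fun i hi => ?_
      have : i ≠ N := Finset.ne_of_mem_erase hi
      simp [hα, hz, this]
    rw [this]
    simp only [hα, hz, if_true]
    rw [← hκr]
    ring
  have hsum0 : ∀ x : BE n, 0 ≤ ∑ i ∈ Finset.univ.erase N, (x i - x0 i) ^ 2 := fun x =>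
    Finset.sum_nonneg fun i _ => sq_nonneg _
  have key := bgl_abp' (m := k * ε1 * r) (d := n * r) (g0 := 0) (S := ∅) (L := k * C1) (x0 := x0) (ψ := ψ)
    hn H (bgl_box_compact l h) (hKC.trans hCU) (bgl_Q_contDiff N α z _ _) ?_ le_rfl isClosed_empty ?_
    (by positivity) (by positivity) ?_ ?_ ?_ ?_
  · have hmd : k * ε1 * r / (n * r) = k * ε1 / n := by field_simp
    rw [hmd, hωE] at key
    have e1 : (∅ : Set (BE n)) = {x | x ∈ (∅ : Set (BE n)) ∧ u x ≤ ψ x} := by ext; simp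
    rw [← e1, measure_empty, mul_zero, add_zero, ← ENNReal.ofReal_mul (by positivity)] at key
    have hbK := (lintegral_mono_set hKC).trans hb
    have hfK := (lintegral_mono_set hKC).trans hf
    have key2 := key.trans (mul_le_mul_right (add_le_add (mul_le_mul_right hbK _) hfK) _)
    rw [← ENNReal.ofReal_mul (by positivity), ← ENNReal.ofReal_add (by positivity) (by positivity),
      ← ENNReal.ofReal_mul (by positivity), ENNReal.ofReal_le_ofReal_iff (by positivity)] at key2
    have h1 : k * ε1 / n + k * C1 ≤ k * (1 + C1) := by
      have : k * ε1 / n ≤ k := by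
        rw [div_le_iff₀ hn0]; nlinarith
      linarith
    have h2 : (k * ε1 / n + k * C1) ^ n ≤ (k * (1 + C1)) ^ n := by gcongr
    have h3 : (3 / lam) ^ n * ((k * ε1 / n + k * C1) ^ n * (c * ε1 ^ n) + c * (k * ε1) ^ n) ≤
        (3 / lam) ^ n * ((k * (1 + C1)) ^ n * (c * ε1 ^ n) + c * (k * ε1) ^ n) := by gcongr
    have h4 : (3 / lam) ^ n * ((k * (1 + C1)) ^ n * (c * ε1 ^ n) + c * (k * ε1) ^ n) =
        (k * ε1 / n) ^ n * ω / 2 := by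
      rw [hc, div_pow (k * ε1), mul_pow k, mul_pow k]
      have : (0:ℝ) < (1 + C1) ^ n + 1 := by positivity
      have : (0:ℝ) < (3 / lam) ^ n := by positivity
      field_simp
    have h5 : 0 < (k * ε1 / n) ^ n * ω := by positivity
    linarith
  · intro x hx
    obtain ⟨h1, h2, h3⟩ := memK x hx
    have : k * C1 = n * (k * (4 + 2 * B)) + k * (1 + 2 * B) := by rw [hC1]; ring
    rw [this]
    refine bgl_Q_grad N α z _ _ x (fun i => ?_) ?_
    · by_cases hi : i = N
      · subst hi
        simp only [hα, hz, if_true]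
        rw [sub_zero, abs_of_nonneg (by have := hs0.le.trans h2; positivity)]
        have : 2 * (B * κ) * x i ≤ 2 * (B * κ) * r := by gcongr
        have e : 2 * (B * κ) * r = 2 * B * (k * ε) := by rw [← hκr]; ring
        have : 2 * B * (k * ε) ≤ 2 * B * (k * 1) := by gcongr
        nlinarith
      · simp only [hα, hz, hi, if_false]
        rw [abs_mul]
        have e0 : |2 * -(4 * κ)| = 8 * κ := by
          rw [abs_of_nonpos (by linarith)]; ring
        rw [e0]
        have : 8 * κ * |x i - x0 i| ≤ 8 * κ * (r / 2) := by gcongr; exact h1 i hi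
        have e : 8 * κ * (r / 2) = 4 * (k * ε) := by rw [← hκr]; ring
        have : k * ε ≤ k * 1 := by gcongr
        nlinarith [mul_pos hk hB0]
    · have h4 : 0 < k * ε := by positivity
      have h5 : k * ε ≤ k * 1 := by gcongr
      have h6 : 2 * B * (k * ε) ≤ 2 * B * (k * 1) := by gcongr
      have h7 : 0 < 2 * B * (k * ε) := by positivity
      rw [abs_le]; constructor <;> linarith
  · intro x hx A hA
    rw [hψ, bgl_Q_trace]
    simp only [Set.indicator_empty, neg_zero]
    have : ∑ i, ((if i = N then B * lam * κ else 0) - 4 * κ * Lam) ≤ ∑ i, A i i * α i := by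
      refine Finset.sum_le_sum fun i _ => ?_
      obtain ⟨ha, hb⟩ := bgl_adm_diag hA i
      by_cases hi : i = N
      · simp only [hα, hi, if_true] at *
        have : lam * (B * κ) ≤ A N N * (B * κ) := by gcongr
        have : 0 < 4 * κ * Lam := by positivity
        nlinarith
      · simp only [hα, hi, if_false] at *
        nlinarith
    rw [Finset.sum_sub_distrib] at this
    simp at this
    have e : (n : ℝ) * (4 * κ * Lam) = B * lam * κ := by rw [hBl]; ring
    rw [e] at this
    linarith
  · intro x hx y hy
    refine bgl_dist_le x y fun i => ?_
    have h1 := hx i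
    have h2 := hy i
    by_cases hi : i = N
    · simp only [hl, hh, hi, if_true] at h1 h2
      rw [hi, abs_le]; constructor <;> linarith
    · simp only [hl, hh, hi, if_false] at h1 h2
      rw [abs_le]; constructor <;> linarith
  · intro x hx hxi
    obtain ⟨h1, h2, h3⟩ := memK x hx
    have huC := hu x (hKC hx)
    have hr2 : k * ε * r = κ * r ^ 2 := by rw [← hκr]; ring
    have hq : 0 ≤ B * (2 * r * x N - x N ^ 2) := mul_nonneg hB0.le (by nlinarith)
    have hS := hsum0 x
    rw [hψv]
    obtain ⟨i, hi⟩ := bgl_box_bdry l h hx hxi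
    by_cases hiN : i = N
    · subst hiN
      simp only [hl, hh, if_true] at hi
      rcases hi with hi | hi
      · have := H.u0 x (hCU (hKC hx))
        rw [hi] at hq ⊢
        have : 0 ≤ κ * (4 * (∑ j ∈ Finset.univ.erase i, (x j - x0 j) ^ 2) + B * (2 * r * s - s ^ 2)) :=
          mul_nonneg hκ0.le (by linarith)
        linarith
      · rw [hi] at huC ⊢
        have h4 : κ * r ^ 2 ≤ κ * (4 * (∑ j ∈ Finset.univ.erase i, (x j - x0 j) ^ 2) + B * (2 * r * r - r ^ 2)) := by
          gcongr
          nlinarith [sq_nonneg r]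
        have : 0 < k * s := by positivity
        nlinarith
    · simp only [hl, hh, hiN, if_false] at hi
      have hsq : (x i - x0 i) ^ 2 = r ^ 2 / 4 := by
        rcases hi with hi | hi <;> rw [hi] <;> ring
      have h5 : (x i - x0 i) ^ 2 ≤ ∑ j ∈ Finset.univ.erase N, (x j - x0 j) ^ 2 :=
        Finset.single_le_sum (f := fun j => (x j - x0 j) ^ 2) (fun j _ => sq_nonneg _)
          (Finset.mem_erase.2 ⟨hiN, Finset.mem_univ i⟩)
      have h4 : κ * r ^ 2 ≤ κ * (4 * (∑ j ∈ Finset.univ.erase N, (x j - x0 j) ^ 2) + B * (2 * r * x N - x N ^ 2)) := by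
        gcongr
        linarith
      have : 0 < k * s := by positivity
      nlinarith
  · intro i
    by_cases hi : i = N
    · simp only [hl, hh, hi, if_true]
      constructor <;> linarith
    · simp only [hl, hh, hi, if_false]
      constructor <;> linarith
  · rw [hψv]
    have e : ∑ i ∈ Finset.univ.erase N, (x0 i - x0 i) ^ 2 = 0 := by simp
    rw [e, ← ht]
    have : κ * (4 * 0 + B * (2 * r * t - t ^ 2)) ≤ κ * (4 * 0 + B * (2 * r * t)) := by
      gcongr; nlinarith [sq_nonneg t]
    have e2 : κ * (4 * 0 + B * (2 * r * t)) = k * (2 * B * ε * t) := by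
      calc _ = 2 * B * t * (κ * r) := by ring
        _ = _ := by rw [hκr]; ring
    linarith

lemma bgl_C_mono {n : ℕ} (N : Fin n) (xs : BE n) {r s : ℝ} (h : r ≤ s) :
    bglC n N xs r ⊆ bglC n N xs s := fun _ hx =>
  ⟨fun i hi => (hx.1 i hi).trans h, hx.2.1, hx.2.2.trans h⟩

lemma bgl_C_meas {n : ℕ} (N : Fin n) (xs : BE n) (r : ℝ) : MeasurableSet (bglC n N xs r) := by
  have hc : ∀ i, Continuous fun x : BE n => x i := fun i =>
    (EuclideanSpace.proj i : BE n →L[ℝ] ℝ).continuous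
  have e : bglC n N xs r = (⋂ i, {x : BE n | i ≠ N → |x i - xs i| ≤ r}) ∩
      ({x | 0 < x N} ∩ {x | x N ≤ r}) := by
    ext x; simp [bglC]
  rw [e]
  refine (MeasurableSet.iInter fun i => ?_).inter
    ((isOpen_lt continuous_const (hc N)).measurableSet.inter
      (isClosed_le (hc N) continuous_const).measurableSet)
  by_cases hi : i = N
  · simp [hi]
  · simp only [ne_eq, hi, not_false_eq_true, true_imp_iff]
    exact (isClosed_le ((hc i).sub continuous_const).abs continuous_const).measurableSet

lemma bgl_C_vol {n : ℕ} (hn : 2 ≤ n) (N : Fin n) (xs : BE n) {r : ℝ} (hr : 0 < r) :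
    volume (bglC n N xs r) ≤
      ENNReal.ofReal (volume.real (Metric.ball (0 : BE n) 1) * (2 * n) ^ n * r ^ n) := by
  have hne : Nonempty (Fin n) := ⟨⟨0, by omega⟩⟩
  rcases (bglC n N xs r).eq_empty_or_nonempty with h | ⟨y, hy⟩
  · rw [h]; simp
  have hsub : bglC n N xs r ⊆ Metric.closedBall y (n * (2 * r)) := by
    intro x hx
    refine bgl_dist_le x y fun i => ?_
    by_cases hi : i = N
    · subst hi
      have := hx.2; have := hy.2
      rw [abs_le]; constructor <;> linarith
    · have h1 := abs_le.1 (hx.1 i hi)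
      have h2 := abs_le.1 (hy.1 i hi)
      rw [abs_le]; constructor <;> linarith
  refine (measure_mono hsub).trans ?_
  rw [Measure.addHaar_closedBall _ _ (by positivity)]
  simp only [finrank_euclideanSpace, Fintype.card_fin]
  rw [← ofReal_measureReal (measure_ball_lt_top (μ := volume) (x := (0 : BE n)) (r := 1)).ne,
    ← ENNReal.ofReal_mul (by positivity)]
  refine le_of_eq ?_
  congr 1
  rw [mul_pow, mul_pow, mul_pow]
  ring

set_option maxHeartbeats 2000000 in
lemma bgl_boundary (n : ℕ) (hn : 2 ≤ n) (lam Lam : ℝ) (hlam : 0 < lam) (hLam : lam ≤ Lam)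
    (q : ℝ) (hq : (n : ℝ) < q) (K : ℝ) (hK : 0 < K) (R : ℝ) (hR : 0 < R) :
    ∃ ε0 r : ℝ, 0 < ε0 ∧ ε0 ≤ 1 / 4 ∧ 0 < r ∧ r < R ∧ ∀ k0 : ℝ, 0 < k0 → ∃ a : ℝ, 0 < a ∧
      ∀ (U U' : Set (BE n)) (b f u : BE n → ℝ), BglSuper n lam Lam U b f u → U' ⊆ U →
      ∀ (N : Fin n) (xs : BE n), bglC n N xs r ⊆ U' →
      LpNormE n q b U ≤ ENNReal.ofReal K → LpNormE n q f U' ≤ ENNReal.ofReal a →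
      (∀ x ∈ bglC n N xs r, k0 * (x N - ε0 * r) ≤ u x) →
      ∀ x, (∀ i, i ≠ N → x i = xs i) → 0 < x N → x N ≤ r → k0 / 4 * x N ≤ u x := by
  have hn0 : (0:ℝ) < n := by exact_mod_cast (by omega : 0 < n)
  obtain ⟨B, c, hB1, hc0, hstep⟩ := bgl_bstep n hn lam Lam hlam hLam
  have hB0 : 0 < B := by linarith
  have hσ : 0 < 1 / (n : ℝ) - 1 / q := sub_pos.2 (one_div_lt_one_div_of_lt hn0 hq)
  set σ := 1 / (n : ℝ) - 1 / q with hσd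
  set W : ℝ := volume.real (Metric.ball (0 : BE n) 1) * (2 * n) ^ n with hW
  have hW0 : 0 ≤ W := by positivity
  set θ : ℝ := ((1 / 2 : ℝ) ^ n) ^ σ with hθ
  have hθ0 : 0 < θ := by positivity
  have hθ1 : θ < 1 := Real.rpow_lt_one (by positivity)
    (pow_lt_one₀ (by norm_num) (by norm_num) (by omega)) hσ
  have hθj : ∀ j : ℕ, 0 < θ ^ j ∧ θ ^ j ≤ 1 := fun j => ⟨by positivity, pow_le_one₀ hθ0.le hθ1.le⟩
  set ε0 : ℝ := (1 - θ) / (4 * B) with hε0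
  have hepsPos : 0 < ε0 := div_pos (by linarith) (by positivity)
  have hBε : B * ε0 = (1 - θ) / 4 := by rw [hε0]; field_simp
  have hepsLe : ε0 ≤ 1 / 4 := by nlinarith
  set γ : ℝ := min c 1 with hγ
  have hγ0 : 0 < γ := lt_min hc0 one_pos
  have hγc : γ ^ n ≤ c := by
    have : γ ^ n ≤ γ ^ 1 := pow_le_pow_of_le_one hγ0.le (min_le_right _ _) (by omega)
    rw [pow_one] at this
    exact this.trans (min_le_left _ _)
  obtain ⟨r, hrη, hrR, hr⟩ : ∃ r : ℝ, (K * (W * r ^ n) ^ σ) ^ n ≤ (γ * (ε0 * θ / 4)) ^ n ∧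
      r < R ∧ 0 < r := by
    have h1 := bgl_small hn hσ K W (η := (γ * (ε0 * θ / 4)) ^ n) (by positivity)
    have h2 : ∀ᶠ r in nhdsWithin (0:ℝ) (Set.Ioi 0), r < R := nhdsWithin_le_nhds (Iio_mem_nhds hR)
    have h3 : ∀ᶠ r in nhdsWithin (0:ℝ) (Set.Ioi 0), 0 < r := eventually_mem_nhdsWithin
    exact (h1.and (h2.and h3)).exists
  have hKr : K * (W * r ^ n) ^ σ ≤ γ * (ε0 * θ / 4) :=
    le_of_pow_le_pow_left₀ (by omega) (by positivity) hrη
  refine ⟨ε0, r, hepsPos, hepsLe, hr, hrR, fun k0 hk0 => ⟨K * (k0 / 2), by positivity, ?_⟩⟩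
  intro U U' b f u H hU' N xs hCU hb hf h0 x hxi hx0 hxr
  have hrj : ∀ j : ℕ, r * (1 / 2) ^ j ≤ r := fun j =>
    mul_le_of_le_one_right hr.le (pow_le_one₀ (by norm_num) (by norm_num))
  have hVol : ∀ j : ℕ, (W * (r * (1 / 2) ^ j) ^ n) ^ σ = (W * r ^ n) ^ σ * θ ^ j := by
    intro j
    rw [hθ, Real.rpow_pow_comm (by positivity), ← Real.mul_rpow (by positivity) (by positivity)]
    congr 1
    rw [mul_pow, ← pow_mul, ← pow_mul, mul_comm j n]
    ring
  have main : ∀ j : ℕ, ∀ x ∈ bglC n N xs (r * (1 / 2) ^ j),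
      k0 * (3 + θ ^ j) / 4 * (x N - ε0 * θ ^ j * (r * (1 / 2) ^ j)) ≤ u x := by
    intro j
    induction j with
    | zero =>
      intro x hx
      simp only [pow_zero, mul_one] at hx ⊢
      have := h0 x hx
      linarith
    | succ j ih =>
      obtain ⟨ht0, ht1⟩ := hθj j
      set T := θ ^ j with hT
      set rj := r * (1 / 2) ^ j with hrjd
      have hrj0 : 0 < rj := by positivity
      have hsub : bglC n N xs rj ⊆ U' := (bgl_C_mono N xs (hrj j)).trans hCU
      have hvol := bgl_C_vol hn N xs hrj0
      have hk : 0 < k0 * (3 + T) / 4 := by positivity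
      have hε1 : 0 < ε0 * (T * θ) / 4 := by positivity
      have hTθ : T * θ ≤ 1 := mul_le_one₀ ht1 hθ0.le hθ1.le
      have hbint := bgl_holder hn hq.le (hsub.trans hU') (bgl_C_meas N xs rj) H.bcont H.b0 hK.le
        (V := W * rj ^ n) (by positivity) hb hvol
      have hfint := bgl_holder hn hq.le hsub (bgl_C_meas N xs rj) (H.fcont.mono hU')
        (fun x hx => H.f0 x (hU' hx)) (K := K * (k0 / 2)) (by positivity)
        (V := W * rj ^ n) (by positivity) hf hvol
      have e1 : K * (W * rj ^ n) ^ σ ≤ γ * (ε0 * (T * θ) / 4) := by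
        rw [hVol j, ← mul_assoc]
        calc K * (W * r ^ n) ^ σ * θ ^ j ≤ γ * (ε0 * θ / 4) * θ ^ j := by gcongr
          _ = _ := by rw [hT]; ring
      have res := hstep U b f u H N xs rj (k0 * (3 + T) / 4) (ε0 * T) (ε0 * (T * θ) / 4) hrj0 hk
        (by positivity) (by nlinarith) hε1 (by nlinarith) (hsub.trans hU') ih ?_ ?_
      · intro x hx
        rw [pow_succ, ← hT]
        have e2 : r * (1 / 2) ^ (j + 1) = rj / 2 := by rw [hrjd, pow_succ]; ring
        rw [e2] at hx ⊢
        refine le_trans ?_ (res x hx)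
        have hxN := hx.2.1
        have e3 : B * (ε0 * T) = (1 - θ) / 4 * T := by rw [← hBε]; ring
        rw [e3]
        have A1 : k0 * (3 + T * θ) / 4 * x N ≤ k0 * (3 + T) / 4 * ((1 - (1 - θ) / 4 * T) * x N) := by
          have : (3 + T * θ) ≤ (3 + T) * (1 - (1 - θ) / 4 * T) := by
            have : 0 ≤ (1 - θ) * T * (1 - T) :=
              mul_nonneg (mul_nonneg (by linarith) ht0.le) (by linarith)
            nlinarith
          calc k0 * (3 + T * θ) / 4 * x N = (3 + T * θ) * (k0 / 4 * x N) := by ring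
            _ ≤ (3 + T) * (1 - (1 - θ) / 4 * T) * (k0 / 4 * x N) := by gcongr
            _ = _ := by ring
        have A2 : k0 * (3 + T) / 4 * (ε0 * (T * θ) / 4 * rj) ≤
            k0 * (3 + T * θ) / 4 * (ε0 * (T * θ) * (rj / 2)) := by
          have : 0 < T * θ := by positivity
          calc k0 * (3 + T) / 4 * (ε0 * (T * θ) / 4 * rj) =
              (3 + T) / 2 * (k0 / 4 * (ε0 * (T * θ) * (rj / 2))) := by ring
            _ ≤ (3 + T * θ) * (k0 / 4 * (ε0 * (T * θ) * (rj / 2))) := by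
              gcongr
              linarith
            _ = _ := by ring
        rw [mul_sub, mul_sub]
        linarith
      · refine hbint.trans (ENNReal.ofReal_le_ofReal ?_)
        calc (K * (W * rj ^ n) ^ σ) ^ n ≤ (γ * (ε0 * (T * θ) / 4)) ^ n := by gcongr
          _ = γ ^ n * (ε0 * (T * θ) / 4) ^ n := mul_pow _ _ _
          _ ≤ _ := by gcongr
      · refine hfint.trans (ENNReal.ofReal_le_ofReal ?_)
        have e4 : K * (k0 / 2) * (W * rj ^ n) ^ σ ≤ γ * (k0 * (3 + T) / 4 * (ε0 * (T * θ) / 4)) := by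
          calc K * (k0 / 2) * (W * rj ^ n) ^ σ = (k0 / 2) * (K * (W * rj ^ n) ^ σ) := by ring
            _ ≤ (k0 * (3 + T) / 4) * (γ * (ε0 * (T * θ) / 4)) := by
              exact mul_le_mul (by nlinarith) e1 (by positivity) hk.le
            _ = _ := by ring
        calc (K * (k0 / 2) * (W * rj ^ n) ^ σ) ^ n ≤
            (γ * (k0 * (3 + T) / 4 * (ε0 * (T * θ) / 4))) ^ n := by gcongr
          _ = γ ^ n * (k0 * (3 + T) / 4 * (ε0 * (T * θ) / 4)) ^ n := mul_pow _ _ _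
          _ ≤ _ := by gcongr
  obtain ⟨j, hj1, hj2⟩ := exists_nat_pow_near_of_lt_one (x := x N / r) (y := (1 / 2 : ℝ))
    (by positivity) ((div_le_one hr).2 hxr) (by norm_num) (by norm_num)
  rw [lt_div_iff₀ hr] at hj1
  rw [div_le_iff₀ hr] at hj2
  have hxC : x ∈ bglC n N xs (r * (1 / 2) ^ j) :=
    ⟨fun i hi => by rw [hxi i hi, sub_self, abs_zero]; positivity, hx0, by linarith⟩
  refine le_trans ?_ (main j x hxC)
  obtain ⟨ht0, ht1⟩ := hθj j
  have h1 : r * (1 / 2) ^ j ≤ 2 * x N := by rw [pow_succ] at hj1; linarith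
  have h2 : ε0 * θ ^ j * (r * (1 / 2) ^ j) ≤ 1 / 4 * 1 * (2 * x N) := by gcongr
  calc k0 / 4 * x N ≤ k0 * 3 / 4 * (x N / 2) := by nlinarith [mul_pos hk0 hx0]
    _ ≤ k0 * (3 + θ ^ j) / 4 * (x N - ε0 * θ ^ j * (r * (1 / 2) ^ j)) := by
      gcongr
      · linarith
      · linarith

lemma bgl_cube_iff {n : ℕ} (hn : 1 ≤ n) (ρ : ℝ) (x : BE n) : x ∈ cubeQ n hn ρ ↔
    ∀ i : Fin n, (if i = (⟨n - 1, by omega⟩ : Fin n) then 0 else -(ρ / 2)) < x i ∧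
      x i < (if i = (⟨n - 1, by omega⟩ : Fin n) then ρ else ρ / 2) := by
  constructor
  · rintro ⟨h1, h2, h3⟩ i
    by_cases hi : i = (⟨n - 1, by omega⟩ : Fin n)
    · subst hi
      simp only [if_true]
      exact ⟨h2, h3⟩
    · simp only [hi, if_false]
      exact abs_lt.1 (h1 i fun h => hi (Fin.ext h))
  · intro h
    refine ⟨fun i hi => ?_, ?_⟩
    · have := h i
      have hi' : i ≠ (⟨n - 1, by omega⟩ : Fin n) := fun h => hi (by rw [h])
      simp only [hi', if_false] at this
      exact abs_lt.2 this
    · have := h ⟨n - 1, by omega⟩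
      simp only [if_true] at this
      exact this

lemma bgl_cube_open {n : ℕ} (hn : 1 ≤ n) (ρ : ℝ) : IsOpen (cubeQ n hn ρ) := by
  have : cubeQ n hn ρ = _ := Set.ext (bgl_cube_iff hn ρ)
  rw [this]
  exact bgl_box_open _ _

lemma bgl_cube_vol {n : ℕ} (hn : 1 ≤ n) (ρ : ℝ) : volume (cubeQ n hn ρ) < ⊤ := by
  refine lt_of_le_of_lt (measure_mono fun x hx => ?_) (bgl_box_compact
    (fun i : Fin n => (if i = (⟨n - 1, by omega⟩ : Fin n) then 0 else -(ρ / 2)))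
    (fun i : Fin n => (if i = (⟨n - 1, by omega⟩ : Fin n) then ρ else ρ / 2))).measure_lt_top
  exact fun i => ⟨((bgl_cube_iff hn ρ x).1 hx i).1.le, ((bgl_cube_iff hn ρ x).1 hx i).2.le⟩

lemma bgl_slab {n : ℕ} (hn : 1 ≤ n) {ν : ℝ} (hν : 0 < ν) : ∃ δ : ℝ, 0 < δ ∧
    volume {x ∈ cubeQ n hn 1 | lastC n hn x ≤ δ} ≤ ENNReal.ofReal ν := by
  have hc : Continuous fun x : BE n => lastC n hn x :=
    (EuclideanSpace.proj (⟨n - 1, by omega⟩ : Fin n) : BE n →L[ℝ] ℝ).continuous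
  set A : ℕ → Set (BE n) := fun j => {x ∈ cubeQ n hn 1 | lastC n hn x ≤ 1 / ((j : ℝ) + 1)} with hA
  have h1 : Filter.Tendsto (volume ∘ A) Filter.atTop (nhds (volume (⋂ j, A j))) := by
    refine tendsto_measure_iInter_atTop (fun j => ?_) (fun i j hij x hx => ⟨hx.1, hx.2.trans ?_⟩)
      ⟨0, ?_⟩
    · exact ((bgl_cube_open hn 1).measurableSet.inter
        (isClosed_le hc continuous_const).measurableSet).nullMeasurableSet
    · exact one_div_le_one_div_of_le (by positivity) (by gcongr)
    · exact ((measure_mono fun x hx => hx.1).trans_lt (bgl_cube_vol hn 1)).ne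
  have h2 : (⋂ j, A j) = ∅ := by
    ext x
    simp only [Set.mem_iInter, Set.mem_empty_iff_false, iff_false]
    intro hx
    have hx0 : 0 < lastC n hn x := (hx 0).1.2.1
    obtain ⟨j, hj⟩ := exists_nat_one_div_lt hx0
    exact absurd (hx j).2 (not_le.2 hj)
  rw [h2, measure_empty] at h1
  obtain ⟨j, hj⟩ := (h1.eventually (gt_mem_nhds (ENNReal.ofReal_pos.2 hν))).exists
  exact ⟨1 / ((j : ℝ) + 1), by positivity, hj.le⟩

set_option maxHeartbeats 2000000 in
/-- Boundary growth lemma in cubes. -/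
theorem boundary_growth_lemma_cubes
    (n : ℕ) (hn : 2 ≤ n) (lam Lam : ℝ) (hlam : 0 < lam) (hLam : lam ≤ Lam)
    (p q d0 K ν : ℝ) (hq : (n : ℝ) < q) (hp : (n : ℝ) ≤ p) (hpq : p ≤ q)
    (hd0 : 0 < d0) (hd0' : d0 ≤ 1 / 4) (hK : 0 < K) (hν : 0 < ν) :
    ∃ k a : ℝ, 0 < k ∧ 0 < a ∧
      ∀ b f u : EuclideanSpace ℝ (Fin n) → ℝ,
        ContinuousOn b (cubeQ n (by omega) 2) →
        ContinuousOn f (cubeQ n (by omega) 2) →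
        (∀ x ∈ cubeQ n (by omega : 1 ≤ n) 2, 0 ≤ b x) →
        (∀ x ∈ cubeQ n (by omega : 1 ≤ n) 2, 0 ≤ f x) →
        LpNormE n q b (cubeQ n (by omega) 2) ≤ ENNReal.ofReal K →
        LpqNormQ n (by omega) p q d0 f ≤ ENNReal.ofReal a →
        ContDiffOn ℝ 2 u (cubeQ n (by omega) 2) →
        (∀ x ∈ cubeQ n (by omega : 1 ≤ n) 2, 0 ≤ u x) →
        (∀ x ∈ cubeQ n (by omega : 1 ≤ n) 2,
          pucciMinus n lam Lam (hess n u x) - b x * gradNorm n u x ≤ f x) →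
        ENNReal.ofReal ν
            ≤ volume {x ∈ cubeQ n (by omega : 1 ≤ n) 1 | lastC n (by omega) x < u x} →
        ∀ x ∈ cubeQ n (by omega : 1 ≤ n) 1, k * lastC n (by omega) x < u x := by
  have hn1 : 1 ≤ n := by omega
  have hn0 : (0:ℝ) < n := by exact_mod_cast (by omega : 0 < n)
  set N : Fin n := ⟨n - 1, by omega⟩ with hN
  have hlast : ∀ x : BE n, lastC n hn1 x = x N := fun x => rfl
  have hne : ∀ i : Fin n, i ≠ N → i.1 ≠ n - 1 := fun i hi h => hi (Fin.ext h)
  obtain ⟨ε0, r, hε0, hepsLe, hr, hrR, hbd⟩ := bgl_boundary n hn lam Lam hlam hLam q hq K hK (d0 / 2)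
    (by positivity)
  obtain ⟨δ1, hδ1, hslab⟩ := bgl_slab hn1 (half_pos hν)
  set δ : ℝ := min δ1 (ε0 * r) with hδ
  have hδ0 : 0 < δ := lt_min hδ1 (by positivity)
  have hδd1 : δ ≤ δ1 := min_le_left _ _
  have hδr : δ ≤ ε0 * r := min_le_right _ _
  have hr8 : r < 1 / 8 := by linarith
  have hεr : ε0 * r ≤ r / 4 := by nlinarith
  set l : Fin n → ℝ := fun i => if i = N then δ else -(3 / 4) with hl
  set h : Fin n → ℝ := fun i => if i = N then 5 / 4 else 3 / 4 with hh
  set Z : Set (BE n) := {x | ∀ i, l i ≤ x i ∧ x i ≤ h i} with hZ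
  have memZ : ∀ x : BE n, (∀ i, i ≠ N → |x i| ≤ 3 / 4) → δ ≤ x N → x N ≤ 5 / 4 → x ∈ Z := by
    intro x h1 h2 h3 i
    by_cases hi : i = N
    · subst hi
      simp only [hl, hh, if_true]
      exact ⟨h2, h3⟩
    · simp only [hl, hh, hi, if_false]
      exact abs_le.1 (h1 i hi)
  have hZc : Convex ℝ Z := by
    intro x hx y hy a b ha hb hab i
    have h1 := hx i
    have h2 := hy i
    simp only [PiLp.add_apply, PiLp.smul_apply, smul_eq_mul]
    obtain rfl : b = 1 - a := by linarith
    constructor <;> nlinarith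
  have hZU : ∀ x ∈ Z, Metric.closedBall x (δ / 2) ⊆ cubeQ n hn1 2 := by
    intro x hx y hy
    have hyx : ∀ i, |y i - x i| ≤ δ / 2 := by
      intro i
      have h1 : ‖(y - x) i‖ ≤ ‖y - x‖ := PiLp.norm_apply_le (y - x) i
      rw [Metric.mem_closedBall, dist_eq_norm] at hy
      simpa [Real.norm_eq_abs] using h1.trans hy
    rw [bgl_cube_iff]
    intro i
    have h1 := hx i
    have h2 := abs_le.1 (hyx i)
    by_cases hi : i = N
    · simp only [hl, hh, hi, if_true] at h1
      rw [if_pos hi, if_pos hi]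
      rw [hi] at h2 ⊢
      constructor <;> linarith
    · simp only [hl, hh, hi, if_false] at h1
      rw [if_neg hi, if_neg hi]
      constructor <;> linarith
  obtain ⟨c0, a1, hc0, ha1, hint⟩ := bgl_interior n hn lam Lam hlam hLam q hq K hK (cubeQ n hn1 2) Z
    (bgl_box_compact l h) hZc (δ / 2) (by positivity) hZU δ1 (ν / 2) hδ1 (by positivity)
  obtain ⟨a2, ha2, hbd⟩ := hbd (c0 / r) (by positivity)
  set V : ℝ := volume.real (cubeQ n hn1 2) with hV
  have hV0 : 0 ≤ V := measureReal_nonneg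
  have hVE : volume (cubeQ n hn1 2) ≤ ENNReal.ofReal V := by
    rw [hV, ofReal_measureReal (bgl_cube_vol hn1 2).ne]
  set Y : ℝ := V ^ (1 / (n : ℝ) - 1 / p) with hY
  have hY0 : 0 ≤ Y := by positivity
  set y : ℝ := min 1 a1 with hy
  have hy0 : 0 < y := lt_min one_pos ha1
  have hyn : y ^ n ≤ a1 := by
    have : y ^ n ≤ y ^ 1 := pow_le_pow_of_le_one hy0.le (min_le_left _ _) (by omega)
    rw [pow_one] at this
    exact this.trans (min_le_right _ _)
  set a : ℝ := min a2 (y / (1 + Y)) with ha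
  have ha0 : 0 < a := lt_min ha2 (by positivity)
  have haY : a * Y ≤ y := by
    have h1 : a ≤ y / (1 + Y) := min_le_right _ _
    rw [le_div_iff₀ (by positivity)] at h1
    linarith
  refine ⟨min (c0 / 2) (c0 / r / 8), a, by positivity, ha0, ?_⟩
  intro b f u hbc hfc hb0 hf0 hbK hfa hu2 hu0 heq hvol x hx
  have H : BglSuper n lam Lam (cubeQ n hn1 2) b f u :=
    ⟨hlam, hLam, bgl_cube_open hn1 2, hbc, hfc, hb0, hf0, hu2, hu0, heq⟩
  have hfp : LpNormE n p f (cubeQ n hn1 2) ≤ ENNReal.ofReal a := le_trans le_self_add hfa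
  have hfq : LpNormE n q f {x ∈ cubeQ n hn1 2 | lastC n hn1 x < d0} ≤ ENNReal.ofReal a2 :=
    (le_trans le_add_self hfa).trans (ENNReal.ofReal_le_ofReal (min_le_left _ _))
  have hfint := bgl_holder hn hp (subset_refl (cubeQ n hn1 2)) (bgl_cube_open hn1 2).measurableSet hfc hf0
    ha0.le hV0 hfp hVE
  have hfint2 : (∫⁻ x in cubeQ n hn1 2, ENNReal.ofReal (f x ^ n)) ≤ ENNReal.ofReal a1 := by
    refine hfint.trans (ENNReal.ofReal_le_ofReal (le_trans ?_ hyn))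
    exact pow_le_pow_left₀ (by positivity) haY n
  have hvolZ : ENNReal.ofReal (ν / 2) ≤ volume {x | x ∈ Z ∧ δ1 < u x} := by
    have hsub : {x ∈ cubeQ n hn1 1 | lastC n hn1 x < u x} ⊆
        {x ∈ cubeQ n hn1 1 | lastC n hn1 x ≤ δ1} ∪ {x | x ∈ Z ∧ δ1 < u x} := by
      rintro w ⟨hw1, hw2⟩
      by_cases hw : lastC n hn1 w ≤ δ1
      · exact Or.inl ⟨hw1, hw⟩
      · right
        push Not at hw
        refine ⟨memZ w (fun i hi => ?_) ?_ ?_, hw.trans hw2⟩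
        · have := hw1.1 i (hne i hi)
          linarith
        · rw [← hlast]; linarith
        · have := hw1.2.2
          rw [← hlast]; linarith
    have h1 := hvol.trans ((measure_mono hsub).trans (measure_union_le _ _))
    have h2 := h1.trans (add_le_add_left hslab _)
    have e : ENNReal.ofReal ν = ENNReal.ofReal (ν / 2) + ENNReal.ofReal (ν / 2) := by
      rw [← ENNReal.ofReal_add (by positivity) (by positivity)]
      congr 1
      ring
    rw [e] at h2
    exact (ENNReal.add_le_add_iff_left ENNReal.ofReal_ne_top).1 h2
  have huZ := hint b f u H hbK hfint2 hvolZ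
  have hx0 : 0 < x N := hx.2.1
  have hx1 : x N < 1 := hx.2.2
  change min (c0 / 2) (c0 / r / 8) * x N < u x
  have hxi : ∀ i, i ≠ N → |x i| < 1 / 2 := fun i hi => hx.1 i (hne i hi)
  rcases le_or_gt δ (x N) with hδx | hδx
  · have h1 := huZ x (memZ x (fun i hi => by linarith [hxi i hi]) hδx (by linarith))
    have h2 : min (c0 / 2) (c0 / r / 8) * x N ≤ c0 / 2 * 1 := by
      gcongr
      exact min_le_left _ _
    linarith
  · have hxr : x N ≤ r := by linarith
    have hCi : ∀ w ∈ bglC n N x r, ∀ i, i ≠ N → |w i| ≤ 5 / 8 := by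
      intro w hw i hi
      have h1 := abs_le.1 (hw.1 i hi)
      have h2 := abs_lt.1 (hxi i hi)
      rw [abs_le]; constructor <;> linarith
    have hCU : bglC n N x r ⊆ {x ∈ cubeQ n hn1 2 | lastC n hn1 x < d0} := by
      intro w hw
      have h3 := hw.2.2
      refine ⟨⟨fun i hi => ?_, hw.2.1, ?_⟩, ?_⟩
      · have := hCi w hw i (fun h => hi (by rw [h]))
        linarith
      · rw [hlast]; linarith
      · rw [hlast]; linarith
    have h1 := hbd (cubeQ n hn1 2) _ b f u H (fun w hw => hw.1) N x hCU hbK hfq ?_ x (fun _ _ => rfl) hx0 hxr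
    · have h2 : min (c0 / 2) (c0 / r / 8) * x N ≤ c0 / r / 8 * x N := by
        gcongr
        exact min_le_right _ _
      have h3 : 0 < c0 / r * x N := by positivity
      linarith
    · intro w hw
      have hwr := hw.2.2
      rcases le_or_gt δ (w N) with hδw | hδw
      · have h2 := huZ w (memZ w (fun i hi => by linarith [hCi w hw i hi]) hδw (by linarith))
        have h3 : c0 / r * (w N - ε0 * r) ≤ c0 / r * r := by
          gcongr
          have : 0 < ε0 * r := by positivity
          linarith
        have h4 : c0 / r * r = c0 := by field_simp
        linarith
      · have h2 := hu0 w (hCU hw).1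
        have h3 : c0 / r * (w N - ε0 * r) ≤ 0 :=
          mul_nonpos_of_nonneg_of_nonpos (by positivity) (by linarith)
        linarith
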